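/- arXiv:2504.14048 — 2 statements merged into one kernel-verified Lean document; each statement's English description precedes it below -/
import Mathlib

section
/- Let Ω be a lattice in ℂ with Weierstrass functions ℘, ζ, invariants g₂, g₃, and field of endomorphisms k. Assume the Split Semi-Elliptic Conjecture for Ω: for all integers s, n ≥ 0, all ℚ-linearly independent t₁, …, t_s ∈ ℂ and all k-linearly independent p₁, …, p_n ∈ ℂ ∖ Ω, the transcendence degree over ℚ of ℚ(t₁, …, t_s, e^{t₁}, …, e^{t_s}, g₂, g₃, p₁, …, p_n, ℘(p₁), …, ℘(p_n), ζ(p₁), …, ζ(p_n)) is at least s + 2n, unless 2πi ∈ ℚt₁ + ⋯ + ℚt_s and Ω ⊆ kp₁ + ⋯ + kp_n, in which case it is at least s + 2n − 1. Then: (1) for every p ∈ ℂ ∖ Ω, the transcendence degree over ℚ of the field generated by g₂, g₃, p, ℘(p), ζ(p) is at least 2; (2) for every nonzero complex number t and every p ∈ ℂ ∖ Ω, the transcendence degree over ℚ of the field generated by t, e^t, g₂, g₃, p, ℘(p), ζ(p) is at least 3, unless Ω is a CM lattice, t ∈ 2πiℚ and p ∈ ℚω₁ + ℚω₂, in which case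 it is at least 2; (3) for all p₁, p₂ ∈ ℂ ∖ Ω with p₂/p₁ ∉ k, the transcendence degree over ℚ of the field generated by g₂, g₃, p₁, p₂, ℘(p₁), ℘(p₂), ζ(p₁), ζ(p₂) is at least 4. -/
/-!
Each of the three claims is an instance of the Split Semi-Elliptic Conjecture, with
`(s, n) = (0, 1)`, `(1, 1)` and `(0, 2)` respectively.

For `s = 0` the exceptional case cannot occur, since `2πi ≠ 0`. The `k`-linear independence of
`p₁, p₂` is equivalent to `p₂ / p₁ ∉ k` because `k` is a field; the only point needing an argument
is closure under inverses (`inv_mem_endQ`), which comes from the quadratic equation satisfied by a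
complex number that stabilizes the lattice.

For `s = n = 1`, the exceptional case says that `2πi ∈ ℚt` and `Ω ⊆ kp`. The first condition gives
`t ∈ 2πiℚ`. The second gives `ω₁ = c p` and `ω₂ = d p` with `c, d ∈ k`, so that `p = c⁻¹ ω₁` lies in
`ℚω₁ + ℚω₂`, and the non-real number `ω₂ / ω₁ = d / c` lies in `k`, so that `Ω` has complex
multiplication (`exceptional_one_one`).
-/

open Complex

noncomputable section

/-- The lattice `ℤω₁ + ℤω₂`, as a set of complex numbers. -/
def LatticePts (ω₁ ω₂ : ℂ) : Set ℂ := {z | ∃ m n : ℤ, z = m * ω₁ + n * ω₂}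

/-- `ω₁, ω₂` are the basis of a lattice: they are `ℝ`-linearly independent. -/
def IsLatticeBasis (ω₁ ω₂ : ℂ) : Prop := LinearIndependent ℝ ![ω₁, ω₂]

/-- The nonzero lattice points. -/
def LatticePts' (ω₁ ω₂ : ℂ) : Set ℂ := {w | w ∈ LatticePts ω₁ ω₂ ∧ w ≠ 0}

/-- The Weierstrass sigma function of the lattice `ℤω₁ + ℤω₂`:
`σ(z) = z ∏_{ω ∈ Ω∖{0}} (1 − z/ω) exp(z/ω + z²/(2ω²))`. -/
def wSigma (ω₁ ω₂ : ℂ) (z : ℂ) : ℂ :=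
  z * ∏' w : LatticePts' ω₁ ω₂,
    (1 - z / (w : ℂ)) * Complex.exp (z / w + z ^ 2 / (2 * (w : ℂ) ^ 2))

/-- The Weierstrass zeta function `ζ = σ'/σ`. -/
def wZeta (ω₁ ω₂ : ℂ) (z : ℂ) : ℂ := deriv (wSigma ω₁ ω₂) z / wSigma ω₁ ω₂ z

/-- The Weierstrass elliptic function `℘ = -ζ'`. -/
def wP (ω₁ ω₂ : ℂ) (z : ℂ) : ℂ := - deriv (wZeta ω₁ ω₂) z

/-- The invariant `g₂ = 60 Σ_{ω ∈ Ω∖{0}} ω⁻⁴` of the lattice. -/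
def g2 (ω₁ ω₂ : ℂ) : ℂ := 60 * ∑' w : LatticePts' ω₁ ω₂, ((w : ℂ) ^ 4)⁻¹

/-- The invariant `g₃ = 140 Σ_{ω ∈ Ω∖{0}} ω⁻⁶` of the lattice. -/
def g3 (ω₁ ω₂ : ℂ) : ℂ := 140 * ∑' w : LatticePts' ω₁ ω₂, ((w : ℂ) ^ 6)⁻¹

/-- The quasi-period `η(ω) = ζ(z + ω) − ζ(z)` (independent of `z`; we evaluate at the
point `(ω₁+ω₂)/3`, which is never a pole of `ζ`, nor is its translate by a lattice point). -/
def wEta (ω₁ ω₂ : ℂ) (ω : ℂ) : ℂ :=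
  wZeta ω₁ ω₂ ((ω₁ + ω₂) / 3 + ω) - wZeta ω₁ ω₂ ((ω₁ + ω₂) / 3)

/-- The field of endomorphisms `k = {α ∈ ℂ : αΩ ⊆ Ω} ⊗_ℤ ℚ`, as a set of complex numbers:
the `α ∈ ℂ` such that `mα` stabilizes the lattice for some nonzero integer `m`. -/
def endQ (ω₁ ω₂ : ℂ) : Set ℂ :=
  {α | ∃ m : ℤ, m ≠ 0 ∧ ∀ w ∈ LatticePts ω₁ ω₂, (m : ℂ) * α * w ∈ LatticePts ω₁ ω₂}

/-- The transcendence degree over `ℚ` of the subfield `ℚ(S)` of `ℂ` generated by `S` is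
at least `d`: there are `d` algebraically independent elements in `ℚ(S)`. -/
def trdegGe (S : Set ℂ) (d : ℕ) : Prop :=
  ∃ x : Fin d → ℂ, (∀ i, x i ∈ IntermediateField.adjoin ℚ S) ∧ AlgebraicIndependent ℚ x

/-- `p₁, …, p_n` are linearly independent over the field of endomorphisms `k`. -/
def kLinInd (ω₁ ω₂ : ℂ) {n : ℕ} (p : Fin n → ℂ) : Prop :=
  ∀ c : Fin n → ℂ, (∀ i, c i ∈ endQ ω₁ ω₂) → ∑ i, c i * p i = 0 → ∀ i, c i = 0

/-- The generators of the field
`K = ℚ(t₁, …, t_s, e^{t₁}, …, e^{t_s}, g₂, g₃, p₁, …, p_n, ℘(pᵢ), ζ(pᵢ))`. -/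
def Kgens (ω₁ ω₂ : ℂ) {s n : ℕ} (t : Fin s → ℂ) (p : Fin n → ℂ) : Set ℂ :=
  ({g2 ω₁ ω₂, g3 ω₁ ω₂} : Set ℂ) ∪
    Set.range t ∪ Set.range (fun ℓ => Complex.exp (t ℓ)) ∪
    Set.range p ∪ Set.range (fun i => wP ω₁ ω₂ (p i)) ∪
    Set.range (fun i => wZeta ω₁ ω₂ (p i))

/-- The exceptional case: `2πi ∈ ℚt₁ + ⋯ + ℚt_s` and `Ω ⊆ kp₁ + ⋯ + kp_n`. -/
def ExceptionalCase (ω₁ ω₂ : ℂ) {s n : ℕ} (t : Fin s → ℂ) (p : Fin n → ℂ) : Prop :=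
  (2 * Real.pi * Complex.I : ℂ) ∈ Submodule.span ℚ (Set.range t) ∧
    ∀ w ∈ LatticePts ω₁ ω₂,
      ∃ c : Fin n → ℂ, (∀ i, c i ∈ endQ ω₁ ω₂) ∧ w = ∑ i, c i * p i

/-- **The Split Semi-Elliptic Conjecture** for the lattice `ℤω₁ + ℤω₂`. -/
def SplitSemiEllipticConj (ω₁ ω₂ : ℂ) : Prop :=
  ∀ (s n : ℕ) (t : Fin s → ℂ) (p : Fin n → ℂ),
    LinearIndependent ℚ t → (∀ i, p i ∉ LatticePts ω₁ ω₂) → kLinInd ω₁ ω₂ p →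
    (¬ExceptionalCase ω₁ ω₂ t p → trdegGe (Kgens ω₁ ω₂ t p) (s + 2 * n)) ∧
    (ExceptionalCase ω₁ ω₂ t p → trdegGe (Kgens ω₁ ω₂ t p) (s + 2 * n - 1))

/-- The lattice `ℤω₁ + ℤω₂` has complex multiplication: `k ≠ ℚ`. -/
def IsCM (ω₁ ω₂ : ℂ) : Prop :=
  ∃ α ∈ endQ ω₁ ω₂, α ∉ Set.range ((↑) : ℚ → ℂ)

theorem zero_mem_latticePts (ω₁ ω₂ : ℂ) : (0 : ℂ) ∈ LatticePts ω₁ ω₂ := ⟨0, 0, by simp⟩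

theorem left_mem_latticePts (ω₁ ω₂ : ℂ) : ω₁ ∈ LatticePts ω₁ ω₂ := ⟨1, 0, by simp⟩

theorem right_mem_latticePts (ω₁ ω₂ : ℂ) : ω₂ ∈ LatticePts ω₁ ω₂ := ⟨0, 1, by simp⟩

theorem int_mul_mem_latticePts {ω₁ ω₂ w : ℂ} (m : ℤ) (hw : w ∈ LatticePts ω₁ ω₂) :
    (m : ℂ) * w ∈ LatticePts ω₁ ω₂ := by
  obtain ⟨a, b, rfl⟩ := hw
  exact ⟨m * a, m * b, by push_cast; ring⟩

theorem sub_mem_latticePts {ω₁ ω₂ w w' : ℂ} (hw : w ∈ LatticePts ω₁ ω₂)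
    (hw' : w' ∈ LatticePts ω₁ ω₂) : w - w' ∈ LatticePts ω₁ ω₂ := by
  obtain ⟨a, b, rfl⟩ := hw
  obtain ⟨c, d, rfl⟩ := hw'
  exact ⟨a - c, b - d, by push_cast; ring⟩

theorem ne_zero_of_notMem_latticePts {ω₁ ω₂ p : ℂ} (hp : p ∉ LatticePts ω₁ ω₂) : p ≠ 0 := by
  rintro rfl
  exact hp (zero_mem_latticePts ω₁ ω₂)

theorem IsLatticeBasis.left_ne_zero {ω₁ ω₂ : ℂ} (hΩ : IsLatticeBasis ω₁ ω₂) : ω₁ ≠ 0 :=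
  LinearIndependent.ne_zero (v := ![ω₁, ω₂]) 0 hΩ

/-- The quotient `ω₂ / ω₁` of the basis vectors is not real, in particular not rational. -/
theorem IsLatticeBasis.div_notMem_rat {ω₁ ω₂ : ℂ} (hΩ : IsLatticeBasis ω₁ ω₂) :
    ω₂ / ω₁ ∉ Set.range ((↑) : ℚ → ℂ) := by
  rintro ⟨q, hq⟩
  have h0 := hΩ.left_ne_zero
  rw [eq_div_iff h0] at hq
  have h := (LinearIndependent.pair_iff.mp hΩ) (q : ℝ) (-1) (by
    rw [← hq]; simp [Complex.real_smul])
  norm_num at h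

theorem neg_mem_endQ {ω₁ ω₂ α : ℂ} (hα : α ∈ endQ ω₁ ω₂) : -α ∈ endQ ω₁ ω₂ := by
  obtain ⟨m, hm, h⟩ := hα
  refine ⟨-m, neg_ne_zero.mpr hm, fun w hw => ?_⟩
  have := h w hw
  push_cast
  rwa [neg_mul_neg]

theorem mul_mem_endQ {ω₁ ω₂ α β : ℂ} (hα : α ∈ endQ ω₁ ω₂) (hβ : β ∈ endQ ω₁ ω₂) :
    α * β ∈ endQ ω₁ ω₂ := by
  obtain ⟨m, hm, h⟩ := hα
  obtain ⟨n, hn, h'⟩ := hβ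
  refine ⟨m * n, mul_ne_zero hm hn, fun w hw => ?_⟩
  have := h _ (h' w hw)
  push_cast
  convert this using 1
  ring

/-- The set `k` is closed under inverses. If `β = mα` stabilizes the lattice, with trace `T` and
determinant `N` on the basis `ω₁, ω₂`, then `β² - Tβ + N = 0`. If `N ≠ 0` then
`N α⁻¹ = m (T - β)` stabilizes the lattice; if `N = 0` then `β = T`, and `T α⁻¹ = m`. -/
theorem inv_mem_endQ {ω₁ ω₂ α : ℂ} (h1 : ω₁ ≠ 0) (hα : α ∈ endQ ω₁ ω₂) (h0 : α ≠ 0) :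
    α⁻¹ ∈ endQ ω₁ ω₂ := by
  obtain ⟨m, hm, h⟩ := hα
  have hmC : (m : ℂ) ≠ 0 := by exact_mod_cast hm
  obtain ⟨a, b, hab⟩ := h _ (left_mem_latticePts ω₁ ω₂)
  obtain ⟨c, d, hcd⟩ := h _ (right_mem_latticePts ω₁ ω₂)
  have hquad : ((m : ℂ) * α) * (((a + d : ℤ) : ℂ) - m * α) = ((a * d - b * c : ℤ) : ℂ) := by
    apply mul_right_cancel₀ h1
    push_cast
    linear_combination (d - m * α) * hab - b * hcd
  by_cases hN : a * d - b * c = 0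
  · rw [hN, Int.cast_zero] at hquad
    have hβ : ((a + d : ℤ) : ℂ) = m * α :=
      sub_eq_zero.mp ((mul_eq_zero.mp hquad).resolve_left (mul_ne_zero hmC h0))
    refine ⟨a + d, ?_, fun w hw => ?_⟩
    · intro h
      rw [h, Int.cast_zero] at hβ
      exact mul_ne_zero hmC h0 hβ.symm
    · rw [hβ, mul_inv_cancel_right₀ h0]
      exact int_mul_mem_latticePts m hw
  · refine ⟨a * d - b * c, hN, fun w hw => ?_⟩
    have key := int_mul_mem_latticePts m
      (sub_mem_latticePts (int_mul_mem_latticePts (a + d) hw) (h w hw))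
    rw [← hquad]
    convert key using 1
    field_simp

theorem trdegGe_mono {S T : Set ℂ} {d : ℕ} (hST : S ⊆ T) (h : trdegGe S d) : trdegGe T d := by
  obtain ⟨x, hx, hi⟩ := h
  exact ⟨x, fun i => IntermediateField.adjoin.mono ℚ _ _ hST (hx i), hi⟩

theorem trdegGe_of_le {S : Set ℂ} {d e : ℕ} (hde : d ≤ e) (h : trdegGe S e) : trdegGe S d := by
  obtain ⟨x, hx, hi⟩ := h
  exact ⟨x ∘ Fin.castLE hde, fun i => hx _, hi.comp _ (Fin.castLE_injective hde)⟩

/-- With no exponentials (`s = 0`) the exceptional case does not occur. -/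
theorem not_exceptional_zero (ω₁ ω₂ : ℂ) {n : ℕ} (t : Fin 0 → ℂ) (p : Fin n → ℂ) :
    ¬ExceptionalCase ω₁ ω₂ t p := by
  rintro ⟨h, -⟩
  rw [Set.range_eq_empty, Submodule.span_empty, Submodule.mem_bot] at h
  exact Complex.two_pi_I_ne_zero h

theorem kLinInd_one {ω₁ ω₂ p : ℂ} (hp : p ≠ 0) : kLinInd ω₁ ω₂ ![p] := by
  intro c _ h i
  rw [Fin.sum_univ_one] at h
  rw [Subsingleton.elim i 0]
  exact (mul_eq_zero.mp h).resolve_right hp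

theorem kLinInd_two {ω₁ ω₂ p₁ p₂ : ℂ} (h1 : ω₁ ≠ 0) (hp₁ : p₁ ≠ 0)
    (h : p₂ / p₁ ∉ endQ ω₁ ω₂) : kLinInd ω₁ ω₂ ![p₁, p₂] := by
  intro c hc hsum
  simp only [Fin.sum_univ_two, Matrix.cons_val_zero, Matrix.cons_val_one] at hsum
  have hc1 : c 1 = 0 := by
    by_contra hne
    refine h ?_
    have : p₂ / p₁ = -(c 0 * (c 1)⁻¹) := by
      field_simp
      linear_combination hsum
    rw [this]
    exact neg_mem_endQ (mul_mem_endQ (hc 0) (inv_mem_endQ h1 (hc 1) hne))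
  have hc0 : c 0 = 0 := by
    rw [hc1, zero_mul, add_zero] at hsum
    exact (mul_eq_zero.mp hsum).resolve_right hp₁
  intro i
  fin_cases i
  · exact hc0
  · exact hc1

/-- For `s = n = 1`, the exceptional case of the conjecture forces complex multiplication,
`t ∈ 2πiℚ` and `p ∈ ℚω₁ + ℚω₂`. -/
theorem exceptional_one_one {ω₁ ω₂ t p : ℂ} (hΩ : IsLatticeBasis ω₁ ω₂)
    (h : ExceptionalCase ω₁ ω₂ ![t] ![p]) :
    IsCM ω₁ ω₂ ∧ (∃ a : ℚ, t = (a : ℂ) * (2 * Real.pi * Complex.I)) ∧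
      (∃ a b : ℚ, p = (a : ℂ) * ω₁ + (b : ℂ) * ω₂) := by
  have h1 := hΩ.left_ne_zero
  obtain ⟨ht, hw⟩ := h
  obtain ⟨c, hc, hcp⟩ := hw _ (left_mem_latticePts ω₁ ω₂)
  obtain ⟨d, hd, hdp⟩ := hw _ (right_mem_latticePts ω₁ ω₂)
  rw [Fin.sum_univ_one, Matrix.cons_val_zero] at hcp hdp
  have hc0 : c 0 ≠ 0 := fun h => h1 (by rw [hcp, h, zero_mul])
  have hp0 : p ≠ 0 := fun h => h1 (by rw [hcp, h, mul_zero])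
  have hinv := inv_mem_endQ h1 (hc 0) hc0
  refine ⟨⟨ω₂ / ω₁, ?_, hΩ.div_notMem_rat⟩, ?_, ?_⟩
  · have : ω₂ / ω₁ = d 0 * (c 0)⁻¹ := by
      rw [div_eq_iff h1]
      calc ω₂ = d 0 * p := hdp
        _ = d 0 * (c 0)⁻¹ * (c 0 * p) := by field_simp
        _ = d 0 * (c 0)⁻¹ * ω₁ := by rw [← hcp]
    rw [this]
    exact mul_mem_endQ (hd 0) hinv
  · rw [Matrix.range_cons, Matrix.range_empty, Set.union_empty,
      Submodule.mem_span_singleton] at ht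
    obtain ⟨a, ha⟩ := ht
    have ha0 : (a : ℂ) ≠ 0 := by
      intro h
      rw [Rat.cast_eq_zero.mp h, zero_smul] at ha
      exact Complex.two_pi_I_ne_zero ha.symm
    refine ⟨a⁻¹, ?_⟩
    rw [← ha, Rat.smul_def, Rat.cast_inv, inv_mul_cancel_left₀ ha0]
  · obtain ⟨m, hm, hmem⟩ := hinv
    obtain ⟨a, b, hab⟩ := hmem _ (left_mem_latticePts ω₁ ω₂)
    have hmC : (m : ℂ) ≠ 0 := by exact_mod_cast hm
    have hmp : (m : ℂ) * p = a * ω₁ + b * ω₂ := by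
      rw [← hab, mul_assoc]
      congr 1
      rw [eq_inv_mul_iff_mul_eq₀ hc0, ← hcp]
    refine ⟨a / m, b / m, ?_⟩
    push_cast
    field_simp
    linear_combination hmp

/-- **Consequences of the Split Semi-Elliptic Conjecture (Schneider-type statements).**
Assume the Split Semi-Elliptic Conjecture for `Ω`. Then:
(1) for `p ∈ ℂ ∖ Ω`, `trdeg ℚ(g₂, g₃, p, ℘(p), ζ(p)) ≥ 2`;
(2) for `t ≠ 0` and `p ∈ ℂ ∖ Ω`, `trdeg ℚ(t, e^t, g₂, g₃, p, ℘(p), ζ(p)) ≥ 3`, unless `Ω` is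
CM, `t ∈ 2πiℚ` and `p ∈ ℚω₁ + ℚω₂`, in which case it is at least `2`;
(3) for `p₁, p₂ ∈ ℂ ∖ Ω` with `p₂/p₁ ∉ k`,
`trdeg ℚ(g₂, g₃, p₁, p₂, ℘(p₁), ℘(p₂), ζ(p₁), ζ(p₂)) ≥ 4`. -/
theorem splitSemiElliptic_implies_schneider (ω₁ ω₂ : ℂ) (hΩ : IsLatticeBasis ω₁ ω₂)
    (hconj : SplitSemiEllipticConj ω₁ ω₂) :
    (∀ p : ℂ, p ∉ LatticePts ω₁ ω₂ →
      trdegGe ({g2 ω₁ ω₂, g3 ω₁ ω₂, p, wP ω₁ ω₂ p, wZeta ω₁ ω₂ p} : Set ℂ) 2) ∧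
    (∀ t p : ℂ, t ≠ 0 → p ∉ LatticePts ω₁ ω₂ →
      (¬(IsCM ω₁ ω₂ ∧ (∃ a : ℚ, t = (a : ℂ) * (2 * Real.pi * Complex.I)) ∧
          (∃ a b : ℚ, p = (a : ℂ) * ω₁ + (b : ℂ) * ω₂)) →
        trdegGe ({t, Complex.exp t, g2 ω₁ ω₂, g3 ω₁ ω₂, p, wP ω₁ ω₂ p, wZeta ω₁ ω₂ p} :
          Set ℂ) 3) ∧
      ((IsCM ω₁ ω₂ ∧ (∃ a : ℚ, t = (a : ℂ) * (2 * Real.pi * Complex.I)) ∧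
          (∃ a b : ℚ, p = (a : ℂ) * ω₁ + (b : ℂ) * ω₂)) →
        trdegGe ({t, Complex.exp t, g2 ω₁ ω₂, g3 ω₁ ω₂, p, wP ω₁ ω₂ p, wZeta ω₁ ω₂ p} :
          Set ℂ) 2)) ∧
    (∀ p₁ p₂ : ℂ, p₁ ∉ LatticePts ω₁ ω₂ → p₂ ∉ LatticePts ω₁ ω₂ → p₂ / p₁ ∉ endQ ω₁ ω₂ →
      trdegGe ({g2 ω₁ ω₂, g3 ω₁ ω₂, p₁, p₂, wP ω₁ ω₂ p₁, wP ω₁ ω₂ p₂,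
        wZeta ω₁ ω₂ p₁, wZeta ω₁ ω₂ p₂} : Set ℂ) 4) := by
  have h1 := hΩ.left_ne_zero
  refine ⟨fun p hp => ?_, fun t p ht hp => ?_, fun p₁ p₂ hp₁ hp₂ hdiv => ?_⟩
  · have h := (hconj 0 1 ![] ![p] linearIndependent_empty_type (by simpa using hp)
      (kLinInd_one (ne_zero_of_notMem_latticePts hp))).1 (not_exceptional_zero ω₁ ω₂ _ _)
    refine trdegGe_mono ?_ h
    rintro x (((((hx | hx) | ⟨i, -⟩) | ⟨i, rfl⟩) | ⟨i, rfl⟩) | ⟨i, rfl⟩)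
    · rcases hx with rfl | rfl <;> simp
    · obtain ⟨i, -⟩ := hx
      exact i.elim0
    · exact i.elim0
    all_goals simp
  · have h := hconj 1 1 ![t] ![p]
      (LinearIndependent.of_subsingleton 0 (by simpa using ht))
      (by simpa using hp) (kLinInd_one (ne_zero_of_notMem_latticePts hp))
    have hsub : Kgens ω₁ ω₂ ![t] ![p] ⊆ ({t, Complex.exp t, g2 ω₁ ω₂, g3 ω₁ ω₂, p, wP ω₁ ω₂ p,
        wZeta ω₁ ω₂ p} : Set ℂ) := by
      rintro x (((((hx | ⟨i, rfl⟩) | ⟨i, rfl⟩) | ⟨i, rfl⟩) | ⟨i, rfl⟩) | ⟨i, rfl⟩)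
      · rcases hx with rfl | rfl <;> simp
      all_goals simp
    refine ⟨fun hne => ?_, fun _ => ?_⟩
    · exact trdegGe_mono hsub (h.1 fun hex => hne (exceptional_one_one hΩ hex))
    · by_cases hex : ExceptionalCase ω₁ ω₂ ![t] ![p]
      · exact trdegGe_mono hsub (h.2 hex)
      · exact trdegGe_of_le (by norm_num) (trdegGe_mono hsub (h.1 hex))
  · have h := (hconj 0 2 ![] ![p₁, p₂] linearIndependent_empty_type
      (by intro i; fin_cases i <;> assumption)
      (kLinInd_two h1 (ne_zero_of_notMem_latticePts hp₁) hdiv)).1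
      (not_exceptional_zero ω₁ ω₂ _ _)
    refine trdegGe_mono ?_ h
    rintro x (((((hx | hx) | ⟨i, -⟩) | ⟨i, rfl⟩) | ⟨i, rfl⟩) | ⟨i, rfl⟩)
    · rcases hx with rfl | rfl <;> simp
    · obtain ⟨i, -⟩ := hx
      exact i.elim0
    · exact i.elim0
    all_goals fin_cases i <;> simp
end
end

section
/- Let Ω be a lattice in ℂ with Weierstrass functions ℘, ζ, invariants g₂, g₃, and field of endomorphisms k. Assume the Elliptic Schanuel Conjecture for Ω: for every integer n ≥ 0 and all k-linearly independent p₁, …, p_n ∈ ℂ ∖ Ω, at least 2n of the 2 + 3n numbers g₂, g₃, p₁, …, p_n, ℘(p₁), …, ℘(p_n), ζ(p₁), …, ζ(p_n) are algebraically independent over ℚ. Then the ζ-Conjecture holds for Ω: if g₂ and g₃ are algebraic, p ∈ ℂ ∖ Ω is such that ζ(p) is algebraic, and α is an algebraic number different from 0, 1, −1, with α⁴ ≠ 1 if g₃ = 0 and α⁶ ≠ 1 if g₂ = 0, then αp ∉ Ω and ζ(αp) is transcendental over ℚ. -/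
/-!
Write `K` for the field of algebraic numbers, `k` for the field of endomorphisms, and note that
`ζ(p) ∈ K` leaves little room for the conjecture.

* With `n = 1` the conjecture says that `p` and `℘(p)` are algebraically independent; in particular
  `p` is not a torsion point, since torsion values of `℘` are algebraic (`torsion_algebraic`).

* If `α ∉ k`, then `p` and `αp` are `k`-linearly independent. With `αp ∉ Ω` and `ζ(αp) ∈ K`, the four
  algebraically independent numbers promised by the conjecture would be algebraic over
  `ℚ(p, ℘(p), ℘(αp))`, which is absurd. If `αp ∈ Ω`, a torsion point `q = αp / r` takes the place of
  `αp`: now `℘(q) ∈ K`, and all the numbers are algebraic over `ℚ(p, ℘(p), ζ(q))`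
  (`case_not_endQ`).

* If `α ∈ k`, write `α = β / n` with `β` an endomorphism and put `z = p / n`, so that
  `ζ(p) = ζ(nz)` and `ζ(αp) = ζ(βz)`. For an endomorphism `β` of norm `N` there are `c ∈ K` and a
  nonzero polynomial `P` over `K`, whose roots are values of `℘` at the nonzero points of
  `β⁻¹Ω / Ω`, such that
  `2β ζ(βz) = 2N ζ(z) - 2cz + ℘'(z) P'(℘(z)) / P(℘(z))` (`exists_zt_mul`, which rests on the
  addition theorems). Eliminating `ζ(z)` between the formulas for `n` and `β` gives a relation
  between `z` and `℘(z)` over `K`. These two are algebraically independent, so the relation is an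
  identity: a nontrivial combination `f(u)` of `ζ(nu)` and `ζ(βu)` has constant square. Comparing
  poles gives `n⁻¹Ω = β⁻¹Ω` (`pre_subset`), that is `αΩ = Ω` (`case_endQ`).

* Finally `αΩ = Ω` with `α ≠ ±1` makes `α` a root of unity of order `3`, `4` or `6`, and the
  homogeneity of the Eisenstein series forces `g₂ = 0` or `g₃ = 0` accordingly (`unit_cases`).

Mathlib has `℘` and its differential equation for a `PeriodPair`, but not `σ` and `ζ`; their basic
properties (the series for `ζ`, the poles, quasi-periodicity, the addition theorems) are proved
first. The addition theorems come from Liouville's theorem: an elliptic function with removable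
singularities is constant.
-/

open Complex

noncomputable section

/-- **The Elliptic Schanuel Conjecture** for the lattice `ℤω₁ + ℤω₂`: for `k`-linearly
independent `p₁, …, p_n ∈ ℂ ∖ Ω`, at least `2n` of the `2 + 3n` numbers
`g₂, g₃, pᵢ, ℘(pᵢ), ζ(pᵢ)` are algebraically independent over `ℚ`. -/
def EllipticSchanuelConj (ω₁ ω₂ : ℂ) : Prop :=
  ∀ (n : ℕ) (p : Fin n → ℂ), (∀ i, p i ∉ LatticePts ω₁ ω₂) → kLinInd ω₁ ω₂ p →
    ∃ x : Fin (2 * n) → ℂ,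
      (∀ j, x j ∈ ({g2 ω₁ ω₂, g3 ω₁ ω₂} : Set ℂ) ∪ Set.range p ∪
        Set.range (fun i => wP ω₁ ω₂ (p i)) ∪ Set.range (fun i => wZeta ω₁ ω₂ (p i))) ∧
      AlgebraicIndependent ℚ x

namespace ZetaConj

open Filter Topology PeriodPair

/-! ### The logarithmic derivative of the sigma product -/

/-- The primary factor `(1 - x) exp (x + x² / 2)` of the sigma product. -/
def primaryFactor (x : ℂ) : ℂ := (1 - x) * Complex.exp (x + x ^ 2 / 2)

lemma hasDerivAt_primaryFactor (x : ℂ) :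
    HasDerivAt primaryFactor (-x ^ 2 * Complex.exp (x + x ^ 2 / 2)) x := by
  have h1 : HasDerivAt (fun x : ℂ ↦ 1 - x) (-1) x := by
    simpa using (hasDerivAt_id x).const_sub 1
  have h2 : HasDerivAt (fun x : ℂ ↦ x + x ^ 2 / 2) (1 + x) x := by
    have := (hasDerivAt_id x).add ((hasDerivAt_pow 2 x).div_const 2)
    convert! this using 1
    simp
  convert! h1.mul h2.cexp using 1
  ring

lemma norm_primaryFactor_sub_one_le {x : ℂ} (hx : ‖x‖ ≤ 1) :
    ‖primaryFactor x - 1‖ ≤ Real.exp 2 * ‖x‖ ^ 3 := by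
  have key : ∀ y ∈ Metric.closedBall (0 : ℂ) ‖x‖,
      ‖-y ^ 2 * Complex.exp (y + y ^ 2 / 2)‖ ≤ Real.exp 2 * ‖x‖ ^ 2 := by
    intro y hy
    rw [mem_closedBall_zero_iff] at hy
    rw [norm_mul, norm_neg, norm_pow, mul_comm]
    have : (y + y ^ 2 / 2).re ≤ 2 := by
      refine (Complex.re_le_norm _).trans ((norm_add_le _ _).trans ?_)
      rw [norm_div, norm_pow]
      have : ‖y‖ ≤ 1 := hy.trans hx
      simp only [Complex.norm_ofNat]
      nlinarith [norm_nonneg y]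
    rw [Complex.norm_exp]
    gcongr
  have := (convex_closedBall (0 : ℂ) ‖x‖).norm_image_sub_le_of_norm_hasDerivWithin_le
    (f := primaryFactor) (fun y _ ↦ (hasDerivAt_primaryFactor y).hasDerivWithinAt) key
    (x := 0) (y := x) (by simp) (by simp)
  have h0 : primaryFactor 0 = 1 := by simp [primaryFactor]
  rw [h0, sub_zero] at this
  calc _ ≤ _ := this
    _ = _ := by ring

lemma primaryFactor_ne_zero {x : ℂ} (hx : x ≠ 1) : primaryFactor x ≠ 0 :=
  mul_ne_zero (sub_ne_zero.mpr hx.symm) (Complex.exp_ne_zero _)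

lemma mem_latticePts_iff (L : PeriodPair) {z : ℂ} : z ∈ LatticePts L.ω₁ L.ω₂ ↔ z ∈ L.lattice := by
  rw [PeriodPair.mem_lattice]
  simp only [LatticePts, Set.mem_ofPred_eq, eq_comm]

lemma summable_inv_norm_cube (L : PeriodPair) :
    Summable fun w : LatticePts' L.ω₁ L.ω₂ ↦ (‖(w : ℂ)‖ ^ 3)⁻¹ := by
  have h : Summable fun l : L.lattice ↦ ‖l‖ ^ (-3 : ℝ) :=
    ZLattice.summable_norm_rpow _ _ (by simp; norm_num)
  let i : LatticePts' L.ω₁ L.ω₂ → L.lattice := fun w ↦ ⟨w, (mem_latticePts_iff L).mp w.2.1⟩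
  have hi : Function.Injective i := fun a b hab ↦ Subtype.ext (congrArg (Subtype.val : L.lattice → ℂ) hab)
  refine (h.comp_injective hi).congr fun w ↦ ?_
  have : ‖i w‖ = ‖(w : ℂ)‖ := rfl
  simp only [Function.comp, this]
  rw [Real.rpow_neg (norm_nonneg _)]
  norm_cast

/-- The Weierstrass zeta function with its polar term at `0` removed:
`∑_{ω ≠ 0} (1 / (z - ω) + 1 / ω + z / ω²)`. -/
def zetaExcept (L : PeriodPair) (z : ℂ) : ℂ :=
  ∑' l : L.lattice, if (l : ℂ) = 0 then 0 else (1 / (z - l) + 1 / l + z / (l : ℂ) ^ 2)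

/-- Termwise bound for the zeta series, and hence (dominated by `∑ ‖ω‖⁻³`) local uniform
convergence. -/
lemma zeta_term_bound (r : ℝ) (s : ℂ) (hs : ‖s‖ < r) (l : ℂ) (hl0 : l ≠ 0)
    (h : 2 * r ≤ ‖l‖) :
    ‖1 / (s - l) + 1 / l + s / l ^ 2‖ ≤ 2 * r ^ 2 * ‖l‖ ^ (-3 : ℝ) := by
  have hl : 0 < ‖l‖ := norm_pos_iff.mpr hl0
  have hsl : ‖l‖ / 2 ≤ ‖s - l‖ := by
    rw [norm_sub_rev]
    exact .trans (by linarith) (norm_sub_norm_le l s)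
  have hne : s - l ≠ 0 := norm_pos_iff.mp (by linarith)
  have e : 1 / (s - l) + 1 / l + s / l ^ 2 = s ^ 2 / ((s - l) * l ^ 2) := by
    field_simp
    ring
  rw [e, norm_div, norm_mul, norm_pow, norm_pow, Real.rpow_neg hl.le,
    show ‖l‖ ^ (3 : ℝ) = ‖l‖ ^ 3 by norm_cast]
  calc ‖s‖ ^ 2 / (‖s - l‖ * ‖l‖ ^ 2) ≤ r ^ 2 / ((‖l‖ / 2) * ‖l‖ ^ 2) := by gcongr
    _ = _ := by field_simp

lemma hasSumLocallyUniformly_zetaExcept (L : PeriodPair) :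
    HasSumLocallyUniformly
      (fun (l : L.lattice) (z : ℂ) ↦
        if (l : ℂ) = 0 then 0 else (1 / (z - l) + 1 / l + z / (l : ℂ) ^ 2))
      (zetaExcept L) := by
  refine L.hasSumLocallyUniformly_aux (u := (2 * · ^ 2 * ‖·‖ ^ (-3 : ℝ))) _
    (fun _ _ ↦ (ZLattice.summable_norm_rpow _ _ (by simp; norm_num)).mul_left _) fun r hr ↦
    Filter.eventually_atTop.mpr ⟨2 * r, ?_⟩
  rintro _ h s hs l rfl
  split_ifs with h0
  · simp only [norm_zero]; positivity
  · exact zeta_term_bound r s hs l h0 h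

lemma zeta_term_hasDerivAt (L : PeriodPair) (l : L.lattice) {z : ℂ}
    (hz : z ∈ ((L.lattice : Set ℂ) \ {0})ᶜ) :
    HasDerivAt (fun z : ℂ ↦ if (l : ℂ) = 0 then 0 else (1 / (z - l) + 1 / l + z / (l : ℂ) ^ 2))
      (-(if (l : ℂ) = 0 then 0 else (1 / (z - l) ^ 2 - 1 / (l : ℂ) ^ 2))) z := by
  split_ifs with h0
  · simpa using hasDerivAt_const z (0 : ℂ)
  · have hne : z - l ≠ 0 := fun e ↦ by
      obtain rfl := sub_eq_zero.mp e
      exact hz ⟨l.2, h0⟩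
    have h1 := (((hasDerivAt_id z).sub_const (l : ℂ)).inv hne).add_const (1 / (l : ℂ))
    have h2 := h1.add ((hasDerivAt_id z).div_const ((l : ℂ) ^ 2))
    simp only [id, one_div] at h2 ⊢
    convert! h2 using 1
    ring

lemma zetaExcept_deriv (L : PeriodPair) :
    Set.EqOn (deriv (zetaExcept L)) (fun z ↦ -weierstrassPExcept L 0 z)
      ((L.lattice : Set ℂ) \ {0})ᶜ := by
  refine ((hasSumLocallyUniformly_zetaExcept L).tendstoLocallyUniformlyOn.deriv
    (.of_forall fun s ↦ ?_) L.isOpen_compl_lattice_sdiff).unique ?_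
  · exact .fun_sum fun i _ z hz ↦ (zeta_term_hasDerivAt L i hz).differentiableAt.differentiableWithinAt
  · have := (L.hasSumLocallyUniformly_weierstrassPExcept 0).tendstoLocallyUniformlyOn
      (s := ((L.lattice : Set ℂ) \ {0})ᶜ)
    refine TendstoLocallyUniformlyOn.congr this.neg ?_
    intro s z hz
    have := HasDerivAt.fun_sum (u := s) fun i (_ : i ∈ s) ↦ zeta_term_hasDerivAt L i hz
    simp only [Function.comp_apply]
    rw [this.deriv, Finset.sum_neg_distrib]
    simp

lemma differentiableOn_zetaExcept (L : PeriodPair) :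
    DifferentiableOn ℂ (zetaExcept L) ((L.lattice : Set ℂ) \ {0})ᶜ :=
  (hasSumLocallyUniformly_zetaExcept L).hasSumLocallyUniformlyOn.differentiableOn
    (.of_forall fun _ ↦ .fun_sum fun i _ _ hz ↦
      (zeta_term_hasDerivAt L i hz).differentiableAt.differentiableWithinAt)
    L.isOpen_compl_lattice_sdiff

lemma zetaExcept_hasDerivAt (L : PeriodPair) {z : ℂ} (hz : z ∈ ((L.lattice : Set ℂ) \ {0})ᶜ) :
    HasDerivAt (zetaExcept L) (-weierstrassPExcept L 0 z) z := by
  have h := ((differentiableOn_zetaExcept L).differentiableAt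
    (L.isOpen_compl_lattice_sdiff.mem_nhds hz)).hasDerivAt
  rwa [zetaExcept_deriv L hz] at h

lemma zetaExcept_analyticAt (L : PeriodPair) {z : ℂ} (hz : z ∈ ((L.lattice : Set ℂ) \ {0})ᶜ) :
    AnalyticAt ℂ (zetaExcept L) z :=
  (differentiableOn_zetaExcept L).analyticAt (L.isOpen_compl_lattice_sdiff.mem_nhds hz)

@[simp] lemma zetaExcept_zero (L : PeriodPair) : zetaExcept L 0 = 0 := by
  rw [zetaExcept]
  convert tsum_zero with l
  split_ifs with h
  · rfl
  · simp

lemma sigma_eq (L : PeriodPair) (z : ℂ) : wSigma L.ω₁ L.ω₂ z =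
    z * ∏' w : LatticePts' L.ω₁ L.ω₂, primaryFactor (z / w) := by
  simp only [wSigma, primaryFactor]
  congr 2
  ext w
  congr 3
  rw [div_pow, div_div, mul_comm]

/-- The factors of the sigma product are within `O(‖ω‖⁻³)` of `1`, locally uniformly. -/
lemma primaryFactor_div_bound (L : PeriodPair) (r : ℝ) :
    ∀ᶠ w : LatticePts' L.ω₁ L.ω₂ in cofinite, ∀ z ∈ Metric.ball (0 : ℂ) r,
      ‖primaryFactor (z / w) - 1‖ ≤ Real.exp 2 * r ^ 3 * (‖(w : ℂ)‖ ^ 3)⁻¹ := by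
  have h := (summable_inv_norm_cube L).tendsto_cofinite_zero
  by_cases hr : 0 < r
  · filter_upwards [h.eventually_lt_const (show 0 < (r ^ 3)⁻¹ by positivity)] with w hw z hz
    rw [mem_ball_zero_iff] at hz
    have hw0 : 0 < ‖(w : ℂ)‖ := norm_pos_iff.mpr w.2.2
    have hlt : r < ‖(w : ℂ)‖ := by
      have := (inv_lt_inv₀ (by positivity) (by positivity)).mp hw
      exact lt_of_pow_lt_pow_left₀ 3 hw0.le this
    have hz1 : ‖z / w‖ ≤ 1 := by
      rw [norm_div, div_le_one hw0]; linarith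
    refine (norm_primaryFactor_sub_one_le hz1).trans ?_
    rw [norm_div, div_pow, mul_assoc, div_eq_mul_inv]
    gcongr
  · exact .of_forall fun w z hz ↦ by
      rw [mem_ball_zero_iff] at hz
      exact absurd ((norm_nonneg z).trans_lt hz) hr

lemma z_div_ne_one {L : PeriodPair} {z : ℂ} (hz : z ∉ L.lattice) (w : LatticePts' L.ω₁ L.ω₂) :
    z / w ≠ 1 := fun e ↦ by
  rw [div_eq_one_iff_eq w.2.2] at e
  exact hz (e ▸ (mem_latticePts_iff L).mp w.2.1)

lemma wZeta_eq_tsum (L : PeriodPair) {z : ℂ} (hz : z ∉ L.lattice) :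
    wZeta L.ω₁ L.ω₂ z = 1 / z +
      ∑' w : LatticePts' L.ω₁ L.ω₂, (1 / (z - w) + 1 / w + z / (w : ℂ) ^ 2) := by
  have hz0 : z ≠ 0 := fun h ↦ hz (h ▸ L.lattice.zero_mem)
  let f : LatticePts' L.ω₁ L.ω₂ → ℂ → ℂ := fun w z ↦ primaryFactor (z / w)
  have hfz : ∀ w, f w z ≠ 0 := fun w ↦ primaryFactor_ne_zero (z_div_ne_one hz w)
  have hderiv : ∀ w y, HasDerivAt (f w)
      (-(y / w) ^ 2 * Complex.exp ((y / w) + (y / w) ^ 2 / 2) * (1 / w)) y := fun w y ↦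
    HasDerivAt.comp (h := fun y : ℂ ↦ y / (w : ℂ)) (h₂ := primaryFactor) y
      (hasDerivAt_primaryFactor (y / w)) ((hasDerivAt_id y).div_const (w : ℂ))
  have hlog : ∀ w : LatticePts' L.ω₁ L.ω₂,
      logDeriv (f w) z = 1 / (z - w) + 1 / w + z / (w : ℂ) ^ 2 := by
    intro w
    have hw0 : (w : ℂ) ≠ 0 := w.2.2
    have h1 : (w : ℂ) - z ≠ 0 := fun e ↦ z_div_ne_one hz w
      ((div_eq_one_iff_eq hw0).mpr (sub_eq_zero.mp e).symm)
    have h2 : z - w ≠ 0 := fun e ↦ h1 (by rw [← neg_sub, e, neg_zero])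
    rw [logDeriv_apply, (hderiv w z).deriv]
    simp only [f, primaryFactor]
    have := Complex.exp_ne_zero (z / w + (z / w) ^ 2 / 2)
    have h3 : 1 - z / (w : ℂ) ≠ 0 := by
      rw [one_sub_div hw0]; exact div_ne_zero h1 hw0
    rw [div_eq_iff (mul_ne_zero h3 this)]
    rw [show (1 - z / (w : ℂ)) = -(z - w) / w by field_simp; ring]
    field_simp
    ring
  set r := ‖z‖ + 1 with hr
  have hzr : z ∈ Metric.ball (0 : ℂ) r := by simp [r]
  have hsum : Summable fun w : LatticePts' L.ω₁ L.ω₂ ↦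
      Real.exp 2 * r ^ 3 * (‖(w : ℂ)‖ ^ 3)⁻¹ := (summable_inv_norm_cube L).mul_left _
  have hmul : MultipliableLocallyUniformlyOn f (Metric.ball 0 r) := by
    have := Summable.multipliableLocallyUniformlyOn_one_add (f := fun w z ↦ f w z - 1)
      Metric.isOpen_ball hsum (primaryFactor_div_bound L r)
      (fun w ↦ ((continuous_iff_continuousAt.mpr fun y ↦
        (hderiv w y).continuousAt).sub continuous_const).continuousOn)
    simpa using this
  have hne : ∏' w, f w z ≠ 0 := by
    have := tprod_one_add_ne_zero_of_summable (f := fun w ↦ f w z - 1) (by simpa using hfz)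
      (hsum.of_norm_bounded_eventually (by
        filter_upwards [primaryFactor_div_bound L r] with w hw
        simpa using hw z hzr))
    simpa using this
  have hsl : Summable fun w ↦ logDeriv (f w) z := by
    simp_rw [hlog]
    have h := (HasSumLocallyUniformly.hasSum (hasSumLocallyUniformly_zetaExcept L) (x := z)).summable
    let i : LatticePts' L.ω₁ L.ω₂ → L.lattice := fun w ↦ ⟨w, (mem_latticePts_iff L).mp w.2.1⟩
    have hi : Function.Injective i := fun a b hab ↦ Subtype.ext (congrArg (Subtype.val : L.lattice → ℂ) hab)
    refine (h.comp_injective hi).congr fun w ↦ ?_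
    simp [i, w.2.2]
  have hprod : DifferentiableAt ℂ (fun y ↦ ∏' w, f w y) z := by
    have := hmul.hasProdLocallyUniformlyOn.differentiableOn
      (.of_forall fun s ↦ DifferentiableOn.fun_finsetProd fun i _ y _ ↦
        (hderiv i y).differentiableAt.differentiableWithinAt) Metric.isOpen_ball
    exact this.differentiableAt (Metric.isOpen_ball.mem_nhds hzr)
  have hs : wSigma L.ω₁ L.ω₂ = fun z ↦ z * ∏' w, f w z := funext (sigma_eq L)
  rw [wZeta, hs, ← logDeriv_apply (fun z ↦ z * ∏' w, f w z) z,
    logDeriv_mul z hz0 hne differentiableAt_fun_id hprod, ← tsum_congr hlog,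
    ← logDeriv_tprod_eq_tsum Metric.isOpen_ball hzr hfz
      (fun i y _ ↦ (hderiv i y).differentiableAt.differentiableWithinAt) hsl hmul hne]
  simp [logDeriv_apply]

lemma tsum_latticePts' (L : PeriodPair) (f : ℂ → ℂ) :
    ∑' w : LatticePts' L.ω₁ L.ω₂, f w = ∑' l : L.lattice, if (l : ℂ) = 0 then 0 else f l := by
  let i : LatticePts' L.ω₁ L.ω₂ → L.lattice := fun w ↦ ⟨w, (mem_latticePts_iff L).mp w.2.1⟩
  have hi : Function.Injective i := fun a b hab ↦ Subtype.ext (congrArg (Subtype.val : L.lattice → ℂ) hab)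
  rw [← hi.tsum_eq]
  · refine tsum_congr fun w ↦ ?_
    simp [i, w.2.2]
  · intro l hl
    have : (l : ℂ) ≠ 0 := fun h ↦ hl (by simp [h])
    exact ⟨⟨l, (mem_latticePts_iff L).mpr l.2, this⟩, rfl⟩

lemma wZeta_eq (L : PeriodPair) {z : ℂ} (hz : z ∉ L.lattice) :
    wZeta L.ω₁ L.ω₂ z = 1 / z + zetaExcept L z := by
  rw [wZeta_eq_tsum L hz, zetaExcept, tsum_latticePts' L fun w ↦ 1 / (z - w) + 1 / w + z / w ^ 2]

lemma g2_eq (L : PeriodPair) : g2 L.ω₁ L.ω₂ = L.g₂ := by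
  rw [g2, PeriodPair.g₂, PeriodPair.G, tsum_latticePts' L fun w ↦ (w ^ 4)⁻¹]
  congr 2; ext l; split_ifs with h <;> simp [h]

lemma g3_eq (L : PeriodPair) : g3 L.ω₁ L.ω₂ = L.g₃ := by
  rw [g3, PeriodPair.g₃, PeriodPair.G, tsum_latticePts' L fun w ↦ (w ^ 6)⁻¹]
  congr 2; ext l; split_ifs with h <;> simp [h]

lemma isOpen_compl_lattice (L : PeriodPair) : IsOpen ((L.lattice : Set ℂ)ᶜ) :=
  L.isClosed_lattice.isOpen_compl

lemma weierstrassP_eq (L : PeriodPair) (z : ℂ) :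
    weierstrassP L z = 1 / z ^ 2 + weierstrassPExcept L 0 z := by
  have := L.weierstrassPExcept_add 0 z
  simp only [ZeroMemClass.coe_zero] at this
  rw [← this]; simp; ring

lemma wZeta_hasDerivAt (L : PeriodPair) {z : ℂ} (hz : z ∉ L.lattice) :
    HasDerivAt (wZeta L.ω₁ L.ω₂) (-weierstrassP L z) z := by
  have hz0 : z ≠ 0 := fun h ↦ hz (h ▸ L.lattice.zero_mem)
  have h1 : HasDerivAt (fun z ↦ 1 / z + zetaExcept L z) (-weierstrassP L z) z := by
    have := (hasDerivAt_inv hz0).add (zetaExcept_hasDerivAt L (fun h ↦ hz h.1))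
    simp only [one_div]
    convert! this using 1
    rw [weierstrassP_eq]; simp; ring
  refine h1.congr_of_eventuallyEq ?_
  filter_upwards [(isOpen_compl_lattice L).mem_nhds hz] with y hy
  exact wZeta_eq L hy

lemma wP_eq (L : PeriodPair) {z : ℂ} (hz : z ∉ L.lattice) :
    wP L.ω₁ L.ω₂ z = weierstrassP L z := by
  rw [wP, (wZeta_hasDerivAt L hz).deriv, neg_neg]

/-! ### Removable singularities and Liouville's theorem for elliptic functions -/

/-- `f` agrees on a punctured neighbourhood of `z₀` with a function analytic at `z₀`. -/
def Rem (f : ℂ → ℂ) (z₀ : ℂ) : Prop := ∃ g, AnalyticAt ℂ g z₀ ∧ f =ᶠ[𝓝[≠] z₀] g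

lemma Rem.of_analyticAt {f : ℂ → ℂ} {z₀ : ℂ} (h : AnalyticAt ℂ f z₀) : Rem f z₀ :=
  ⟨f, h, .rfl⟩

lemma Rem.congr {f g : ℂ → ℂ} {z₀ : ℂ} (h : Rem f z₀) (hfg : g =ᶠ[𝓝[≠] z₀] f) : Rem g z₀ := by
  obtain ⟨k, hk, hfk⟩ := h
  exact ⟨k, hk, hfg.trans hfk⟩

lemma Rem.add {f g : ℂ → ℂ} {z₀ : ℂ} (hf : Rem f z₀) (hg : Rem g z₀) :
    Rem (fun z ↦ f z + g z) z₀ := by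
  obtain ⟨k, hk, hfk⟩ := hf
  obtain ⟨l, hl, hgl⟩ := hg
  exact ⟨_, hk.fun_add hl, by filter_upwards [hfk, hgl] with z h1 h2; rw [h1, h2]⟩

lemma Rem.sub {f g : ℂ → ℂ} {z₀ : ℂ} (hf : Rem f z₀) (hg : Rem g z₀) :
    Rem (fun z ↦ f z - g z) z₀ := by
  obtain ⟨k, hk, hfk⟩ := hf
  obtain ⟨l, hl, hgl⟩ := hg
  exact ⟨_, hk.fun_sub hl, by filter_upwards [hfk, hgl] with z h1 h2; rw [h1, h2]⟩

lemma Rem.mul {f g : ℂ → ℂ} {z₀ : ℂ} (hf : Rem f z₀) (hg : Rem g z₀) :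
    Rem (fun z ↦ f z * g z) z₀ := by
  obtain ⟨k, hk, hfk⟩ := hf
  obtain ⟨l, hl, hgl⟩ := hg
  exact ⟨_, hk.fun_mul hl, by filter_upwards [hfk, hgl] with z h1 h2; rw [h1, h2]⟩

lemma Rem.const (c z₀ : ℂ) : Rem (fun _ ↦ c) z₀ := .of_analyticAt analyticAt_const

lemma Rem.sum {ι : Type*} (s : Finset ι) {f : ι → ℂ → ℂ} {z₀ : ℂ} (h : ∀ i ∈ s, Rem (f i) z₀) :
    Rem (fun z ↦ ∑ i ∈ s, f i z) z₀ := by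
  classical
  induction s using Finset.induction_on with
  | empty => simpa using Rem.const 0 z₀
  | insert a s ha ih =>
    simp only [Finset.sum_insert ha]
    exact (h a (Finset.mem_insert_self _ _)).add
      (ih fun i hi ↦ h i (Finset.mem_insert_of_mem hi))

lemma tendsto_add_punctured (z₀ ω : ℂ) :
    Tendsto (fun z ↦ z + ω) (𝓝[≠] z₀) (𝓝[≠] (z₀ + ω)) := by
  refine tendsto_nhdsWithin_of_tendsto_nhds_of_eventually_within _
    (((continuous_id.add continuous_const).tendsto z₀).mono_left nhdsWithin_le_nhds) ?_
  filter_upwards [self_mem_nhdsWithin] with z hz h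
  exact hz (add_right_cancel h)

lemma tendsto_neg_punctured (z₀ : ℂ) : Tendsto (fun z ↦ -z) (𝓝[≠] z₀) (𝓝[≠] (-z₀)) := by
  refine tendsto_nhdsWithin_of_tendsto_nhds_of_eventually_within _
    ((continuous_neg.tendsto z₀).mono_left nhdsWithin_le_nhds) ?_
  filter_upwards [self_mem_nhdsWithin] with z hz h
  exact hz (neg_injective h)

lemma Rem.translate {f : ℂ → ℂ} {z₀ ω : ℂ} (h : Rem f (z₀ + ω))
    (hf : ∀ᶠ z in 𝓝[≠] z₀, f (z + ω) = f z) : Rem f z₀ := by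
  obtain ⟨g, hg, hfg⟩ := h
  refine ⟨fun z ↦ g (z + ω), hg.comp_of_eq (analyticAt_id.add analyticAt_const) rfl, ?_⟩
  filter_upwards [hf, (tendsto_add_punctured z₀ ω).eventually hfg] with z h1 h2
  rw [← h1, h2]

lemma eq_of_eventuallyEq_punctured {f g : ℂ → ℂ} {z₀ : ℂ} (hf : ContinuousAt f z₀)
    (hg : ContinuousAt g z₀) (h : f =ᶠ[𝓝[≠] z₀] g) : f z₀ = g z₀ :=
  ((hf.eventuallyEq_nhds_iff_eventuallyEq_nhdsNE hg).mp h).eq_of_nhds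

/-- Liouville's theorem for elliptic functions: a periodic function all of whose singularities
are removable is constant (up to its values at the singularities). -/
lemma liouville (L : PeriodPair) {f : ℂ → ℂ} (hf : ∀ z₀, Rem f z₀)
    (hper : ∀ ω ∈ L.lattice, ∀ z₀, ∀ᶠ z in 𝓝[≠] z₀, f (z + ω) = f z) :
    ∃ c, ∀ z₀, ∀ᶠ z in 𝓝[≠] z₀, f z = c := by
  choose g hg hfg using hf
  let G : ℂ → ℂ := fun z ↦ g z z
  have hG : ∀ z₀, G =ᶠ[𝓝 z₀] g z₀ := by
    intro z₀
    have h1 : ∀ᶠ z in 𝓝 z₀, z ≠ z₀ → f z = g z₀ z := by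
      exact eventually_nhdsWithin_iff.mp (hfg z₀)
    filter_upwards [h1.eventually_nhds, (hg z₀).eventually_analyticAt] with z h2 h3
    by_cases hz : z = z₀
    · subst hz; rfl
    · refine eq_of_eventuallyEq_punctured (f := g z) (hg z).continuousAt h3.continuousAt ?_
      have h4 : ∀ᶠ w in 𝓝[≠] z, w ≠ z₀ :=
        nhdsWithin_le_nhds (isOpen_ne.mem_nhds hz)
      filter_upwards [hfg z, h2.filter_mono nhdsWithin_le_nhds, h4] with w h5 h6 h7
      rw [← h5, h6 h7]
  have hGa : ∀ z, AnalyticAt ℂ G z := fun z ↦ (hg z).congr (hG z).symm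
  have hGd : Differentiable ℂ G := fun z ↦ (hGa z).differentiableAt
  have hGper : ∀ z, ∀ ω ∈ L.lattice, G (z + ω) = G z := by
    intro z ω hω
    refine eq_of_eventuallyEq_punctured (f := fun w ↦ g (z + ω) (w + ω)) (g := g z)
      ?_ (hg z).continuousAt ?_
    · exact ContinuousAt.comp (f := fun w : ℂ ↦ w + ω) (g := g (z + ω)) (hg (z + ω)).continuousAt
        (by fun_prop)
    · filter_upwards [hper ω hω z, hfg z, (tendsto_add_punctured z ω).eventually (hfg (z + ω))]
        with w h1 h2 h3
      rw [← h3, h1, h2]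
  have hb : Bornology.IsBounded (Set.range G) :=
    (IsZLattice.isCompact_range_of_periodic L.lattice G hGd.continuous
      (fun z w hw ↦ hGper z w hw)).isBounded
  refine ⟨G 0, fun z₀ ↦ ?_⟩
  filter_upwards [hfg z₀, (hG z₀).filter_mono nhdsWithin_le_nhds] with z h1 h2
  rw [h1, ← h2, hGd.apply_eq_apply_of_bounded hb z 0]

/-! ### The Weierstrass functions near lattice points -/

lemma compl_punctured (L : PeriodPair) (z₀ : ℂ) : ∀ᶠ z in 𝓝[≠] z₀, z ∉ L.lattice := by
  have h := L.isOpen_compl_lattice_sdiff (s := {z₀})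
  have h1 := nhdsWithin_le_nhds (s := {z₀}ᶜ) (h.mem_nhds (show z₀ ∈ ((L.lattice : Set ℂ) \ {z₀})ᶜ from
    fun h ↦ h.2 rfl))
  filter_upwards [h1, self_mem_nhdsWithin] with z hz hne hmem
  exact hz ⟨hmem, hne⟩

lemma compl_punctured_add (L : PeriodPair) (z₀ s : ℂ) : ∀ᶠ z in 𝓝[≠] z₀, z + s ∉ L.lattice :=
  (tendsto_add_punctured z₀ s).eventually (compl_punctured L _)

lemma compl_punctured_sub (L : PeriodPair) (z₀ s : ℂ) : ∀ᶠ z in 𝓝[≠] z₀, z - s ∉ L.lattice := by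
  simpa only [sub_eq_add_neg] using compl_punctured_add L z₀ (-s)

lemma isPreconnected_compl_countable {s : Set ℂ} (hs : s.Countable) : IsPreconnected sᶜ :=
  (hs.isPathConnected_compl_of_one_lt_rank
    (by simp [Complex.rank_real_complex])).isConnected.isPreconnected

lemma countable_lattice (L : PeriodPair) : (L.lattice : Set ℂ).Countable :=
  Set.countable_coe_iff.mp (inferInstanceAs (Countable L.lattice))

lemma isPreconnected_compl (L : PeriodPair) : IsPreconnected ((L.lattice : Set ℂ)ᶜ) :=
  isPreconnected_compl_countable (countable_lattice L)

lemma add_notMem {L : PeriodPair} {z ω : ℂ} (hω : ω ∈ L.lattice) (hz : z ∉ L.lattice) :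
    z + ω ∉ L.lattice := fun h ↦ hz ((L.lattice.add_mem_iff_left hω).mp h)

lemma neg_notMem {L : PeriodPair} {z : ℂ} (hz : z ∉ L.lattice) : -z ∉ L.lattice :=
  fun h ↦ hz (by simpa using L.lattice.neg_mem h)

lemma wP_add {L : PeriodPair} {ω : ℂ} (hω : ω ∈ L.lattice) (z : ℂ) :
    weierstrassP L (z + ω) = weierstrassP L z := L.weierstrassP_add_coe z ⟨ω, hω⟩

lemma dP_add {L : PeriodPair} {ω : ℂ} (hω : ω ∈ L.lattice) (z : ℂ) :
    derivWeierstrassP L (z + ω) = derivWeierstrassP L z := L.derivWeierstrassP_add_coe z ⟨ω, hω⟩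

lemma wP_hasDerivAt (L : PeriodPair) {z : ℂ} (hz : z ∉ L.lattice) :
    HasDerivAt (weierstrassP L) (derivWeierstrassP L z) z := by
  have := (L.analyticOnNhd_weierstrassP z hz).differentiableAt.hasDerivAt
  rwa [L.deriv_weierstrassP] at this

lemma wP_analyticAt (L : PeriodPair) {z : ℂ} (hz : z ∉ L.lattice) :
    AnalyticAt ℂ (weierstrassP L) z := L.analyticOnNhd_weierstrassP z hz

lemma dP_analyticAt (L : PeriodPair) {z : ℂ} (hz : z ∉ L.lattice) :
    AnalyticAt ℂ (derivWeierstrassP L) z := L.analyticOnNhd_derivWeierstrassP z hz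

/-- The Weierstrass zeta function of a period pair. -/
abbrev zt (L : PeriodPair) : ℂ → ℂ := wZeta L.ω₁ L.ω₂

lemma zt_differentiableOn (L : PeriodPair) : DifferentiableOn ℂ (zt L) ((L.lattice : Set ℂ)ᶜ) :=
  fun _ hz ↦ (wZeta_hasDerivAt L hz).differentiableAt.differentiableWithinAt

lemma zt_analyticAt (L : PeriodPair) {z : ℂ} (hz : z ∉ L.lattice) : AnalyticAt ℂ (zt L) z :=
  (zt_differentiableOn L).analyticAt ((isOpen_compl_lattice L).mem_nhds hz)

lemma zetaExcept_neg (L : PeriodPair) (z : ℂ) : zetaExcept L (-z) = -zetaExcept L z := by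
  simp only [zetaExcept]
  rw [← (Equiv.neg L.lattice).tsum_eq, ← tsum_neg]
  refine tsum_congr fun l ↦ ?_
  simp only [Equiv.neg_apply, NegMemClass.coe_neg, neg_eq_zero]
  split_ifs
  · simp
  · rw [show -z - -(l : ℂ) = -(z - l) by ring]
    simp only [div_neg, neg_div, even_two.neg_pow]
    ring

lemma zt_neg (L : PeriodPair) {z : ℂ} (hz : z ∉ L.lattice) : zt L (-z) = -zt L z := by
  rw [zt, wZeta_eq L hz, wZeta_eq L (neg_notMem hz), zetaExcept_neg]
  simp only [div_neg]; ring

lemma eq_of_deriv_eq_on_compl {s : Set ℂ} (hs : s.Countable) (ho : IsOpen sᶜ) {f : ℂ → ℂ}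
    (hf : ∀ z ∉ s, HasDerivAt f 0 z) {z w : ℂ} (hz : z ∉ s) (hw : w ∉ s) : f z = f w :=
  ho.is_const_of_deriv_eq_zero (isPreconnected_compl_countable hs)
    (fun y hy ↦ (hf y hy).differentiableAt.differentiableWithinAt)
    (fun y hy ↦ (hf y hy).deriv) hz hw

/-- Quasi-periodicity of the zeta function. -/
lemma zt_add (L : PeriodPair) {ω : ℂ} (hω : ω ∈ L.lattice) :
    ∃ η, ∀ z ∉ L.lattice, zt L (z + ω) = zt L z + η := by
  refine ⟨zt L (L.ω₁ / 2 + ω) - zt L (L.ω₁ / 2), fun z hz ↦ ?_⟩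
  have key := eq_of_deriv_eq_on_compl (countable_lattice L) (isOpen_compl_lattice L)
    (f := fun z ↦ zt L (z + ω) - zt L z) (fun z hz ↦ by
      have h1 := (wZeta_hasDerivAt L (add_notMem hω hz)).comp_add_const z ω
      have := h1.sub (wZeta_hasDerivAt L hz)
      rwa [wP_add hω, sub_self] at this) hz (L.ω₁_div_two_notMem_lattice)
  rw [← key]; ring

/-- At each lattice point the zeta function has a simple pole with residue `1`. -/
lemma zt_pole (L : PeriodPair) {ω : ℂ} (hω : ω ∈ L.lattice) :
    ∃ g, AnalyticAt ℂ g ω ∧ ∀ z ∉ L.lattice, zt L z = 1 / (z - ω) + g z := by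
  obtain ⟨η, hη⟩ := zt_add L hω
  refine ⟨fun z ↦ zetaExcept L (z - ω) + η, ?_, fun z hz ↦ ?_⟩
  · refine AnalyticAt.fun_add (AnalyticAt.fun_comp_of_eq (g := zetaExcept L) (y := 0) ?_ ?_ ?_) analyticAt_const
    · exact zetaExcept_analyticAt L (fun h ↦ h.2 rfl)
    · fun_prop
    · simp
  · have h1 : z - ω ∉ L.lattice := by
      simpa [sub_eq_add_neg] using add_notMem (L.lattice.neg_mem hω) hz
    have := hη (z - ω) h1
    rw [sub_add_cancel, zt, wZeta_eq L h1] at this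
    rw [zt, this]; ring

lemma Rem.div_sub {h : ℂ → ℂ} {z₀ : ℂ} (hh : AnalyticAt ℂ h z₀) (h0 : h z₀ = 0) :
    Rem (fun z ↦ h z / (z - z₀)) z₀ := by
  refine ⟨dslope h z₀, ?_, ?_⟩
  · obtain ⟨p, hp⟩ := hh
    exact ⟨_, hp.has_fpower_series_dslope_fslope⟩
  · filter_upwards [self_mem_nhdsWithin] with z hz
    rw [dslope_of_ne _ hz, slope_def_field, h0, sub_zero]

/-- A simple pole of a translate of `ζ` is cancelled by a zero. -/
lemma rem_zt_mul (L : PeriodPair) {h : ℂ → ℂ} {z₀ s : ℂ} (hh : AnalyticAt ℂ h z₀)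
    (h0 : z₀ + s ∈ L.lattice → h z₀ = 0) : Rem (fun z ↦ zt L (z + s) * h z) z₀ := by
  by_cases hs : z₀ + s ∈ L.lattice
  · obtain ⟨g, hg, hgz⟩ := zt_pole L hs
    have h1 : AnalyticAt ℂ (fun z ↦ g (z + s)) z₀ :=
      hg.comp_of_eq (analyticAt_id.add analyticAt_const) rfl
    refine ((Rem.div_sub hh (h0 hs)).add (Rem.of_analyticAt (h1.fun_mul hh))).congr ?_
    filter_upwards [compl_punctured_add L z₀ s] with z hz
    rw [hgz _ hz]
    rw [show z + s - (z₀ + s) = z - z₀ by ring]; ring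
  · exact .of_analyticAt (((zt_analyticAt L hs).comp_of_eq
      (analyticAt_id.add analyticAt_const) rfl).mul hh)

/-- A double zero at `0` cancels `z⁻²`. -/
lemma rem_div_sq {h : ℂ → ℂ} (hh : AnalyticAt ℂ h 0) (h0 : h 0 = 0) (h1 : HasDerivAt h 0 0) :
    Rem (fun z ↦ h z / z ^ 2) 0 := by
  have ha : AnalyticAt ℂ (dslope h 0) 0 := by
    obtain ⟨p, hp⟩ := hh
    exact ⟨_, hp.has_fpower_series_dslope_fslope⟩
  refine (Rem.div_sub ha (by rw [dslope_same, h1.deriv])).congr ?_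
  filter_upwards [self_mem_nhdsWithin] with z hz
  rw [dslope_of_ne _ hz, slope_def_field, h0, sub_zero, sub_zero]
  field_simp

lemma tendsto_wP (L : PeriodPair) : Tendsto (fun z ↦ ‖weierstrassP L z‖) (𝓝[≠] 0) atTop := by
  have h1 : Tendsto (fun z : ℂ ↦ ‖1 / z ^ 2‖) (𝓝[≠] 0) atTop := by
    simp only [norm_inv, norm_pow, one_div]
    refine Tendsto.comp (tendsto_inv_nhdsGT_zero (𝕜 := ℝ)) ?_
    refine tendsto_nhdsWithin_of_tendsto_nhds_of_eventually_within _ ?_ ?_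
    · have : Continuous fun z : ℂ ↦ ‖z‖ ^ 2 := by fun_prop
      simpa using (this.tendsto 0).mono_left nhdsWithin_le_nhds
    · filter_upwards [self_mem_nhdsWithin] with z hz
      have : 0 < ‖z‖ := norm_pos_iff.mpr hz
      simp only [Set.mem_Ioi]; positivity
  have h2 : ContinuousAt (weierstrassPExcept L 0) 0 := by
    simpa using (L.analyticAt_weierstrassPExcept 0).continuousAt
  have h3 : ∀ᶠ z in 𝓝[≠] (0 : ℂ), ‖weierstrassPExcept L 0 z‖ ≤ ‖weierstrassPExcept L 0 0‖ + 1 :=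
    nhdsWithin_le_nhds (h2.norm.eventually_le_const (by simp))
  refine tendsto_atTop_mono' _ ?_ (tendsto_atTop_add_const_right _
    (-(‖weierstrassPExcept L 0 0‖ + 1)) h1)
  filter_upwards [h3] with z hz
  rw [weierstrassP_eq]
  have := norm_sub_norm_le (1 / z ^ 2) (-weierstrassPExcept L 0 z)
  rw [norm_neg, sub_neg_eq_add] at this
  linarith

/-- `℘` is transcendental over the constants: a nonzero polynomial in `℘` has isolated zeros. -/
lemma poly_wP_ne_zero (L : PeriodPair) {Q : Polynomial ℂ} (hQ : Q ≠ 0) {z₀ : ℂ}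
    (hz₀ : z₀ ∉ L.lattice) : ∀ᶠ z in 𝓝[≠] z₀, Q.eval (weierstrassP L z) ≠ 0 := by
  by_contra hcon
  have han : AnalyticOnNhd ℂ (fun z ↦ Q.eval (weierstrassP L z)) ((L.lattice : Set ℂ)ᶜ) := by
    intro z hz
    have := (wP_analyticAt L hz).aeval_polynomial Q
    simpa using this
  have h0 := han.eqOn_zero_of_preconnected_of_frequently_eq_zero (isPreconnected_compl L) hz₀
    hcon
  obtain ⟨M, hM⟩ := Q.roots.toFinset.finite_toSet.isBounded.exists_norm_le
  obtain ⟨z, hz1, hz2⟩ := ((tendsto_wP L).eventually_gt_atTop M |>.and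
    (compl_punctured L 0)).exists
  have := hM (weierstrassP L z) (by
    simp only [Finset.mem_coe, Multiset.mem_toFinset, Polynomial.mem_roots hQ]
    exact h0 hz2)
  linarith

lemma dP_ne_zero (L : PeriodPair) {z₀ : ℂ} (hz₀ : z₀ ∉ L.lattice) :
    ∀ᶠ z in 𝓝[≠] z₀, derivWeierstrassP L z ≠ 0 := by
  have hQ : (4 * Polynomial.X ^ 3 - Polynomial.C L.g₂ * Polynomial.X - Polynomial.C L.g₃ :
      Polynomial ℂ) ≠ 0 := fun h ↦ by
    have := congrArg (Polynomial.coeff · 3) h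
    simp [show (4 : Polynomial ℂ) = Polynomial.C 4 from rfl] at this
  filter_upwards [poly_wP_ne_zero L hQ hz₀, compl_punctured L z₀] with z hz hz' h
  apply hz
  have := L.derivWeierstrassP_sq z hz'
  rw [h] at this
  simp only [Polynomial.eval_sub, Polynomial.eval_mul, Polynomial.eval_pow, Polynomial.eval_X,
    Polynomial.eval_C, Polynomial.eval_ofNat]
  rw [← this]; ring

/-- `℘'' = 6 ℘² - g₂ / 2`. -/
lemma dP_hasDerivAt (L : PeriodPair) {z : ℂ} (hz : z ∉ L.lattice) :
    HasDerivAt (derivWeierstrassP L) (6 * weierstrassP L z ^ 2 - L.g₂ / 2) z := by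
  have hd : ∀ w ∉ L.lattice, HasDerivAt (derivWeierstrassP L) (deriv (derivWeierstrassP L) w) w :=
    fun w hw ↦ (dP_analyticAt L hw).differentiableAt.hasDerivAt
  have key : deriv (derivWeierstrassP L) z = 6 * weierstrassP L z ^ 2 - L.g₂ / 2 := by
    refine eq_of_eventuallyEq_punctured (g := fun z ↦ 6 * weierstrassP L z ^ 2 - L.g₂ / 2)
      (dP_analyticAt L hz).deriv.continuousAt ?_ ?_
    · have := (wP_analyticAt L hz).continuousAt
      fun_prop
    · filter_upwards [dP_ne_zero L hz, compl_punctured L z] with w hw hwL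
      have h1 := (hd w hwL).fun_pow 2
      have h2 := (((wP_hasDerivAt L hwL).fun_pow 3).const_mul 4).sub
        ((wP_hasDerivAt L hwL).const_mul L.g₂) |>.sub_const L.g₃
      have h3 : (fun z ↦ derivWeierstrassP L z ^ 2) =ᶠ[𝓝 w] fun z ↦
          4 * weierstrassP L z ^ 3 - L.g₂ * weierstrassP L z - L.g₃ := by
        filter_upwards [(isOpen_compl_lattice L).mem_nhds hwL] with u hu
        exact L.derivWeierstrassP_sq u hu
      have h4 := h1.unique (h2.congr_of_eventuallyEq h3)
      push_cast at h4
      have : derivWeierstrassP L w * (deriv (derivWeierstrassP L) w -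
          (6 * weierstrassP L w ^ 2 - L.g₂ / 2)) = 0 := by linear_combination h4 / 2
      exact sub_eq_zero.mp ((mul_eq_zero.mp this).resolve_left hw)
  exact key ▸ hd z hz

/-! ### Addition formulas -/

lemma dP_eq (L : PeriodPair) {z : ℂ} (hz : z ∉ L.lattice) :
    derivWeierstrassP L z = -2 / z ^ 3 + deriv (weierstrassPExcept L 0) z := by
  have hz0 : z ≠ 0 := fun h ↦ hz (h ▸ L.lattice.zero_mem)
  have ha : AnalyticAt ℂ (weierstrassPExcept L 0) z := by
    have := (L.analyticOnNhd_weierstrassPExcept 0) z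
    exact this (fun h ↦ hz h.1)
  have h1 := ((hasDerivAt_pow 2 z).fun_inv (pow_ne_zero 2 hz0)).fun_add
    ha.differentiableAt.hasDerivAt
  have h2 : (fun z ↦ (z ^ 2)⁻¹ + weierstrassPExcept L 0 z) = weierstrassP L := by
    funext z; rw [weierstrassP_eq, one_div]
  rw [h2] at h1
  rw [(wP_hasDerivAt L hz).unique h1]
  congr 1
  push_cast
  field_simp

/-- The function whose vanishing is the addition formula for `ζ`. -/
def addF (L : PeriodPair) (t z : ℂ) : ℂ :=
  (zt L (z + -t) + zt L (z + t) - 2 * zt L z) * (weierstrassP L z - weierstrassP L t) -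
    derivWeierstrassP L z

lemma addF_periodic (L : PeriodPair) (t : ℂ) {ω : ℂ} (hω : ω ∈ L.lattice) (z₀ : ℂ) :
    ∀ᶠ z in 𝓝[≠] z₀, addF L t (z + ω) = addF L t z := by
  obtain ⟨η, hη⟩ := zt_add L hω
  filter_upwards [compl_punctured L z₀, compl_punctured_add L z₀ t, compl_punctured_add L z₀ (-t)]
    with z h1 h2 h3
  simp only [addF]
  rw [add_right_comm z ω, add_right_comm z ω, hη _ h1, hη _ h2, hη _ h3, wP_add hω, dP_add hω]
  ring

/-- The Laurent expansion at `0` shows that `addF` has no pole there. -/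
lemma addF_rem_zero (L : PeriodPair) {t : ℂ} (ht : t ∉ L.lattice) : Rem (addF L t) 0 := by
  let p := weierstrassPExcept L 0
  let e := zetaExcept L
  let A : ℂ → ℂ := fun z ↦ zt L (z + -t) + zt L (z + t)
  have hp : AnalyticAt ℂ p 0 := by simpa using L.analyticAt_weierstrassPExcept 0
  have he : AnalyticAt ℂ e 0 := zetaExcept_analyticAt L (fun h ↦ h.2 rfl)
  have hp0 : p 0 = 0 := by simp [p]
  have he' : HasDerivAt e 0 0 := by
    have := zetaExcept_hasDerivAt L (z := 0) (fun h ↦ h.2 rfl)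
    rwa [show weierstrassPExcept L 0 0 = 0 from hp0, neg_zero] at this
  have ht1 : 0 + -t ∉ L.lattice := by simpa using ht
  have ht2 : 0 + t ∉ L.lattice := by simpa using ht
  have hA : AnalyticAt ℂ A 0 := AnalyticAt.fun_add
    ((zt_analyticAt L ht1).fun_comp_of_eq (by fun_prop) rfl)
    ((zt_analyticAt L ht2).fun_comp_of_eq (by fun_prop) rfl)
  have hA0 : A 0 = 0 := by
    simp only [A, zero_add]; rw [zt_neg L ht]; ring
  have hA' : HasDerivAt A (-2 * weierstrassP L t) 0 := by
    have := ((wZeta_hasDerivAt L ht1).comp_add_const 0 (-t)).fun_add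
      ((wZeta_hasDerivAt L ht2).comp_add_const 0 t)
    simp only [zero_add] at this
    rw [L.weierstrassP_neg] at this
    convert! this using 1
    ring
  let g : ℂ → ℂ := fun z ↦ A z - 2 * e z - 2 * (z * (p z - weierstrassP L t))
  have hg : AnalyticAt ℂ g 0 := by
    simp only [g]; fun_prop
  have hg0 : g 0 = 0 := by simp [g, hA0, e]
  have hg' : HasDerivAt g 0 0 := by
    have := (hA'.fun_sub (he'.const_mul 2)).fun_sub
      (((hasDerivAt_id (0 : ℂ)).fun_mul
        (hp.differentiableAt.hasDerivAt.sub_const (weierstrassP L t))).const_mul 2)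
    convert! this using 1
    simp [hp0]
  have hr : AnalyticAt ℂ (fun z ↦ (A z - 2 * e z) * (p z - weierstrassP L t) - deriv p z) 0 := by
    have := hp.deriv
    fun_prop
  refine ((rem_div_sq hg hg0 hg').add (.of_analyticAt hr)).congr ?_
  filter_upwards [compl_punctured L 0, self_mem_nhdsWithin] with z hz hz0
  have hz0 : z ≠ 0 := hz0
  simp only [addF, g, A]
  rw [show zt L z = 1 / z + e z from wZeta_eq L hz, dP_eq L hz,
    show weierstrassP L z = 1 / z ^ 2 + p z from weierstrassP_eq L z]
  field_simp
  ring

lemma addF_rem (L : PeriodPair) {t : ℂ} (ht : t ∉ L.lattice) (z₀ : ℂ) : Rem (addF L t) z₀ := by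
  by_cases hz : z₀ ∈ L.lattice
  · refine Rem.translate (ω := -z₀) ?_ (addF_periodic L t (L.lattice.neg_mem hz) z₀)
    rw [add_neg_cancel]
    exact addF_rem_zero L ht
  · have hB : AnalyticAt ℂ (fun z ↦ weierstrassP L z - weierstrassP L t) z₀ :=
      (wP_analyticAt L hz).fun_sub analyticAt_const
    have h1 : z₀ + -t ∈ L.lattice → weierstrassP L z₀ - weierstrassP L t = 0 := fun h ↦ by
      have := wP_add (L := L) h t
      rw [show t + (z₀ + -t) = z₀ by ring] at this
      rw [this, sub_self]
    have h2 : z₀ + t ∈ L.lattice → weierstrassP L z₀ - weierstrassP L t = 0 := fun h ↦ by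
      have := wP_add (L := L) h (-t)
      rw [show -t + (z₀ + t) = z₀ by ring, L.weierstrassP_neg] at this
      rw [this, sub_self]
    refine ((((rem_zt_mul L hB h1).add (rem_zt_mul L hB h2)).sub
      (.of_analyticAt (((analyticAt_const (v := (2 : ℂ))).fun_mul (zt_analyticAt L hz)).fun_mul hB))).sub
      (.of_analyticAt (dP_analyticAt L hz))).congr (.of_forall fun z ↦ ?_)
    simp only [addF]
    ring

lemma addF_analyticAt (L : PeriodPair) {t z : ℂ} (hz : z ∉ L.lattice)
    (h1 : z + -t ∉ L.lattice) (h2 : z + t ∉ L.lattice) : AnalyticAt ℂ (addF L t) z := by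
  have a1 : AnalyticAt ℂ (fun z ↦ zt L (z + -t)) z :=
    (zt_analyticAt L h1).fun_comp_of_eq (by fun_prop) rfl
  have a2 : AnalyticAt ℂ (fun z ↦ zt L (z + t)) z :=
    (zt_analyticAt L h2).fun_comp_of_eq (by fun_prop) rfl
  have a3 := zt_analyticAt L hz
  have a4 := wP_analyticAt L hz
  have a5 := dP_analyticAt L hz
  unfold addF
  fun_prop

lemma addF_eq_zero (L : PeriodPair) {t z : ℂ} (ht : t ∉ L.lattice) (hz : z ∉ L.lattice)
    (h1 : z + -t ∉ L.lattice) (h2 : z + t ∉ L.lattice) : addF L t z = 0 := by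
  obtain ⟨c, hc⟩ := liouville L (addF_rem L ht) fun ω hω z₀ ↦ addF_periodic L t hω z₀
  have h3 := (tendsto_neg_punctured 0).eventually (by simpa using hc 0)
  obtain ⟨w, ⟨hw1, hw2⟩, hw3, hw4, hw5⟩ := ((hc 0).and h3 |>.and ((compl_punctured L 0).and
    ((compl_punctured_add L 0 t).and (compl_punctured_add L 0 (-t))))).exists
  have hodd : addF L t (-w) = -addF L t w := by
    simp only [addF]
    rw [show -w + -t = -(w + t) by ring, show -w + t = -(w + -t) by ring, zt_neg L hw3, zt_neg L hw4,
      zt_neg L hw5, L.weierstrassP_neg, L.derivWeierstrassP_neg]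
    ring
  have hc0 : c = 0 := by
    rw [hw2, hw1] at hodd
    linear_combination hodd / 2
  rw [hc0] at hc
  exact eq_of_eventuallyEq_punctured (addF_analyticAt L hz h1 h2).continuousAt
    continuousAt_const (hc z)

/-- The addition formula for `ζ`, symmetrised in the second variable. -/
lemma zt_add_sub (L : PeriodPair) {t z : ℂ} (ht : t ∉ L.lattice) (hz : z ∉ L.lattice)
    (h1 : z - t ∉ L.lattice) (h2 : z + t ∉ L.lattice) :
    (zt L (z - t) + zt L (z + t) - 2 * zt L z) * (weierstrassP L z - weierstrassP L t) =
      derivWeierstrassP L z := by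
  have := addF_eq_zero L ht hz (by rwa [← sub_eq_add_neg]) h2
  rw [addF, ← sub_eq_add_neg] at this
  exact sub_eq_zero.mp this

/-- The values `℘(z - t) + ℘(z + t)` as a rational function of `℘(z)` and `℘(t)`. -/
lemma wP_add_sub (L : PeriodPair) {t z : ℂ} (ht : t ∉ L.lattice) (hz : z ∉ L.lattice)
    (h1 : z - t ∉ L.lattice) (h2 : z + t ∉ L.lattice) :
    (weierstrassP L (z - t) + weierstrassP L (z + t)) *
      (weierstrassP L z - weierstrassP L t) ^ 2 =
    2 * weierstrassP L z * (weierstrassP L z - weierstrassP L t) ^ 2 -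
      (6 * weierstrassP L z ^ 2 - L.g₂ / 2) * (weierstrassP L z - weierstrassP L t) +
      (4 * weierstrassP L z ^ 3 - L.g₂ * weierstrassP L z - L.g₃) := by
  have hd := ((((wZeta_hasDerivAt L h1).comp_sub_const z t).fun_add
    ((wZeta_hasDerivAt L h2).comp_add_const z t)).fun_sub
    ((wZeta_hasDerivAt L hz).const_mul 2)).fun_mul ((wP_hasDerivAt L hz).sub_const (weierstrassP L t))
  have he : (fun z ↦ (zt L (z - t) + zt L (z + t) - 2 * zt L z) *
      (weierstrassP L z - weierstrassP L t)) =ᶠ[𝓝 z] derivWeierstrassP L := by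
    have ho := isOpen_compl_lattice L
    have c1 : ContinuousAt (fun z : ℂ ↦ z - t) z := by fun_prop
    have c2 : ContinuousAt (fun z : ℂ ↦ z + t) z := by fun_prop
    filter_upwards [ho.mem_nhds hz, c1.preimage_mem_nhds (ho.mem_nhds h1),
      c2.preimage_mem_nhds (ho.mem_nhds h2)] with w w1 w2 w3
    exact zt_add_sub L ht w1 w2 w3
  have h3 := hd.unique ((dP_hasDerivAt L hz).congr_of_eventuallyEq he)
  have h4 := zt_add_sub L ht hz h1 h2
  have h5 := L.derivWeierstrassP_sq z hz
  linear_combination (-(weierstrassP L z - weierstrassP L t)) * h3 +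
    derivWeierstrassP L z * h4 + h5

/-- The addition formula for `ζ`. -/
lemma zt_addition (L : PeriodPair) {t z : ℂ} (ht : t ∉ L.lattice) (hz : z ∉ L.lattice)
    (h1 : z - t ∉ L.lattice) (h2 : z + t ∉ L.lattice) :
    (zt L (z + t) - zt L z - zt L t) * (weierstrassP L z - weierstrassP L t) =
      (derivWeierstrassP L z - derivWeierstrassP L t) / 2 := by
  have h3 := zt_add_sub L ht hz h1 h2
  have h4 := zt_add_sub L hz ht (by rw [← neg_sub]; exact neg_notMem h1) (by rwa [add_comm])
  rw [← neg_sub z t, zt_neg L h1, add_comm t z] at h4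
  linear_combination (h3 - h4) / 2

/-- The duplication formula for `ζ`, obtained from the addition formula by differentiation in one
variable along the diagonal. -/
lemma zt_two_mul (L : PeriodPair) {z : ℂ} (hz : z ∉ L.lattice) (h2 : z + z ∉ L.lattice) :
    (zt L (z + z) - 2 * zt L z) * derivWeierstrassP L z =
      (6 * weierstrassP L z ^ 2 - L.g₂ / 2) / 2 := by
  have hd1 := ((((wZeta_hasDerivAt L h2).comp_const_add z z).sub_const (zt L z)).fun_sub
    (wZeta_hasDerivAt L hz)).fun_mul ((wP_hasDerivAt L hz).const_sub (weierstrassP L z))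
  have hd2 := ((dP_hasDerivAt L hz).const_sub (derivWeierstrassP L z)).div_const 2
  have he : (fun t ↦ (zt L (z + t) - zt L z - zt L t) * (weierstrassP L z - weierstrassP L t)) =ᶠ[𝓝 z]
      fun t ↦ (derivWeierstrassP L z - derivWeierstrassP L t) / 2 := by
    have ho := isOpen_compl_lattice L
    have c2 : ContinuousAt (fun t : ℂ ↦ z + t) z := by fun_prop
    have h3 : ∀ᶠ t in 𝓝 z, t ≠ z → z - t ∉ L.lattice := by
      have := compl_punctured_sub L z z
      rw [eventually_nhdsWithin_iff] at this
      filter_upwards [this] with t ht hne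
      rw [← neg_sub]; exact neg_notMem (ht hne)
    filter_upwards [ho.mem_nhds hz, c2.preimage_mem_nhds (ho.mem_nhds h2), h3] with t w1 w2 w3
    by_cases htz : t = z
    · simp [htz]
    · exact zt_addition L w1 hz (w3 htz) w2
  have h3 := hd1.unique (hd2.congr_of_eventuallyEq he)
  linear_combination -h3

/-- The duplication formula for `℘`. -/
lemma wP_two_mul (L : PeriodPair) {z : ℂ} (hz : z ∉ L.lattice) (h2 : z + z ∉ L.lattice) :
    4 * (4 * weierstrassP L z ^ 3 - L.g₂ * weierstrassP L z - L.g₃) * weierstrassP L (z + z) =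
      (6 * weierstrassP L z ^ 2 - L.g₂ / 2) ^ 2 -
      8 * weierstrassP L z * (4 * weierstrassP L z ^ 3 - L.g₂ * weierstrassP L z - L.g₃) := by
  have hdd : HasDerivAt (fun z : ℂ ↦ z + z) 2 z := by
    have := (hasDerivAt_id z).add (hasDerivAt_id z)
    convert! this using 1; norm_num
  have hd1 := ((HasDerivAt.comp (h := fun z : ℂ ↦ z + z) (h₂ := zt L) z (wZeta_hasDerivAt L h2) hdd).sub
    ((wZeta_hasDerivAt L hz).const_mul 2)).fun_mul (dP_hasDerivAt L hz)
  have hd2 := (((((wP_hasDerivAt L hz).fun_pow 2).const_mul 6).sub_const (L.g₂ / 2)).div_const 2)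
  have he : (fun z ↦ (zt L (z + z) - 2 * zt L z) * derivWeierstrassP L z) =ᶠ[𝓝 z]
      fun z ↦ (6 * weierstrassP L z ^ 2 - L.g₂ / 2) / 2 := by
    have ho := isOpen_compl_lattice L
    have c2 : ContinuousAt (fun t : ℂ ↦ t + t) z := by fun_prop
    filter_upwards [ho.mem_nhds hz, c2.preimage_mem_nhds (ho.mem_nhds h2)] with t w1 w2
    exact zt_two_mul L w1 w2
  have h3 := hd1.unique (hd2.congr_of_eventuallyEq he)
  have h4 := zt_two_mul L hz h2
  have h5 := L.derivWeierstrassP_sq z hz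
  simp only [Function.comp_apply, Pi.sub_apply] at h3
  push_cast at h3
  linear_combination -2 * derivWeierstrassP L z * h3 +
    2 * (6 * weierstrassP L z ^ 2 - L.g₂ / 2) * h4 -
    (4 * weierstrassP L (z + z) + 8 * weierstrassP L z) * h5

/-! ### Multiplication by integers and torsion values -/

lemma tendsto_mul_punctured {c : ℂ} (hc : c ≠ 0) (z₀ : ℂ) :
    Tendsto (fun z ↦ c * z) (𝓝[≠] z₀) (𝓝[≠] (c * z₀)) := by
  refine tendsto_nhdsWithin_of_tendsto_nhds_of_eventually_within _
    (((continuous_const_mul c).tendsto z₀).mono_left nhdsWithin_le_nhds) ?_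
  filter_upwards [self_mem_nhdsWithin] with z hz h
  exact hz (mul_left_cancel₀ hc h)

lemma compl_punctured_mul (L : PeriodPair) {c : ℂ} (hc : c ≠ 0) (z₀ : ℂ) :
    ∀ᶠ z in 𝓝[≠] z₀, c * z ∉ L.lattice :=
  (tendsto_mul_punctured hc z₀).eventually (compl_punctured L _)

lemma compl_punctured_forall_mul (L : PeriodPair) (n : ℕ) (z₀ : ℂ) :
    ∀ᶠ z in 𝓝[≠] z₀, ∀ k : ℕ, 1 ≤ k → k ≤ n → (k : ℂ) * z ∉ L.lattice := by
  have : ∀ᶠ z in 𝓝[≠] z₀, ∀ k ∈ Finset.Icc 1 n, (k : ℂ) * z ∉ L.lattice := by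
    rw [Filter.eventually_all_finset]
    intro k hk
    rw [Finset.mem_Icc] at hk
    exact compl_punctured_mul L (by norm_cast; omega) z₀
  filter_upwards [this] with z hz k h1 h2
  exact hz k (Finset.mem_Icc.mpr ⟨h1, h2⟩)

lemma poly_wP_ne_zero_zero (L : PeriodPair) {Q : Polynomial ℂ} (hQ : Q ≠ 0) :
    ∀ᶠ z in 𝓝[≠] (0 : ℂ), Q.eval (weierstrassP L z) ≠ 0 := by
  obtain ⟨M, hM⟩ := Q.roots.toFinset.finite_toSet.isBounded.exists_norm_le
  filter_upwards [(tendsto_wP L).eventually_gt_atTop M] with z hz h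
  have := hM (weierstrassP L z) (by
    simp only [Finset.mem_coe, Multiset.mem_toFinset, Polynomial.mem_roots hQ]
    exact h)
  linarith

lemma tendsto_sq_mul_wP (L : PeriodPair) :
    Tendsto (fun z ↦ z ^ 2 * weierstrassP L z) (𝓝[≠] 0) (𝓝 1) := by
  have hp : ContinuousAt (weierstrassPExcept L 0) 0 := by
    simpa using (L.analyticAt_weierstrassPExcept 0).continuousAt
  have h : Tendsto (fun z ↦ 1 + z ^ 2 * weierstrassPExcept L 0 z) (𝓝 0) (𝓝 1) := by
    have : ContinuousAt (fun z ↦ 1 + z ^ 2 * weierstrassPExcept L 0 z) 0 := by fun_prop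
    simpa using this.tendsto
  refine (h.mono_left nhdsWithin_le_nhds).congr' ?_
  filter_upwards [self_mem_nhdsWithin] with z hz
  have hz : z ≠ 0 := hz
  rw [weierstrassP_eq]
  field_simp

/-- The pole of `℘(c z)` at `0` has leading coefficient `c⁻²`. -/
lemma wP_mul_ne (L : PeriodPair) {c : ℂ} (hc : c ≠ 0) (hc2 : c ^ 2 ≠ 1) :
    ∃ᶠ z in 𝓝[≠] (0 : ℂ), weierstrassP L (c * z) ≠ weierstrassP L z := by
  intro h
  have h1 := (tendsto_sq_mul_wP L).comp (by simpa using tendsto_mul_punctured hc 0)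
  have h2 := (tendsto_sq_mul_wP L).const_mul (c ^ 2)
  refine hc2 (tendsto_nhds_unique (mul_one (c ^ 2) ▸ h2) (h1.congr' ?_))
  filter_upwards [h] with z hz
  rw [not_not] at hz
  simp only [Function.comp_apply, hz]
  ring

/-- The field of algebraic numbers. -/
abbrev Kalg : IntermediateField ℚ ℂ := algebraicClosure ℚ ℂ

lemma mem_Kalg {x : ℂ} : x ∈ Kalg ↔ IsAlgebraic ℚ x := mem_algebraicClosure_iff

open Polynomial in
/-- For every `n ≥ 1`, `℘(nz)` is a rational function of `℘(z)` with algebraic coefficients. -/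
lemma exists_mul_poly (L : PeriodPair) (h2 : L.g₂ ∈ Kalg) (h3 : L.g₃ ∈ Kalg) (n : ℕ) (hn : 1 ≤ n) :
    ∃ N D : (↥Kalg)[X], D ≠ 0 ∧ ∀ z : ℂ, (∀ k : ℕ, 1 ≤ k → k ≤ n → (k : ℂ) * z ∉ L.lattice) →
      aeval (weierstrassP L z) D * weierstrassP L (n * z) = aeval (weierstrassP L z) N := by
  have hinj : Function.Injective (algebraMap ↥Kalg ℂ) := (algebraMap ↥Kalg ℂ).injective
  induction n using Nat.strong_induction_on with
  | _ n ih =>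
  let c2 : ↥Kalg := ⟨L.g₂, h2⟩
  let c3 : ↥Kalg := ⟨L.g₃, h3⟩
  have e2 : algebraMap ↥Kalg ℂ c2 = L.g₂ := rfl
  have e3 : algebraMap ↥Kalg ℂ c3 = L.g₃ := rfl
  obtain rfl | rfl | ⟨m, hm, rfl⟩ : n = 1 ∨ n = 2 ∨ ∃ m, 2 ≤ m ∧ n = m + 1 := by
    rcases Nat.lt_or_ge n 3 with h | h
    · omega
    · exact .inr (.inr ⟨n - 1, by omega, by omega⟩)
  · exact ⟨X, 1, one_ne_zero, fun z _ ↦ by simp⟩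
  · refine ⟨(6 * X ^ 2 - C (c2 / 2)) ^ 2 - 8 * X * (4 * X ^ 3 - C c2 * X - C c3),
      4 * (4 * X ^ 3 - C c2 * X - C c3), fun h ↦ ?_, fun z hz ↦ ?_⟩
    · have := congrArg (Polynomial.coeff · 3) h
      simp [show (4 : (↥Kalg)[X]) = C 4 from rfl] at this
    · have hz1 := hz 1 le_rfl (by norm_num)
      have hz2 := hz 2 (by norm_num) le_rfl
      rw [Nat.cast_one, one_mul] at hz1
      rw [Nat.cast_ofNat, two_mul] at hz2 ⊢
      have := wP_two_mul L hz1 hz2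
      simp only [map_sub, map_mul, map_pow, aeval_X, aeval_C, map_ofNat, e2, e3, map_div₀]
      exact this
  · obtain ⟨U, D, hD, hU⟩ := ih m (by omega) (by omega)
    obtain ⟨M, E, hE, hM⟩ := ih (m - 1) (by omega) (by omega)
    have hne : U - X * D ≠ 0 := by
      intro h
      have hm0 : (m : ℂ) ≠ 0 := by norm_cast; omega
      have hm1 : (m : ℂ) ^ 2 ≠ 1 := by
        norm_cast; nlinarith
      have hDm : D.map (algebraMap ↥Kalg ℂ) ≠ 0 := (Polynomial.map_ne_zero_iff hinj).mpr hD
      refine wP_mul_ne L hm0 hm1 ?_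
      filter_upwards [poly_wP_ne_zero_zero L hDm, compl_punctured_forall_mul L m 0] with z h4 h5
      rw [not_not]
      rw [eval_map_algebraMap] at h4
      refine mul_left_cancel₀ h4 ?_
      rw [hU z h5, sub_eq_zero.mp h]
      simp [mul_comm]
    refine ⟨E * (2 * U * (U - X * D) ^ 2 - (6 * U ^ 2 - C (c2 / 2) * D ^ 2) * (U - X * D) +
        (4 * U ^ 3 - C c2 * U * D ^ 2 - C c3 * D ^ 3)) - M * (U - X * D) ^ 2 * D,
      (U - X * D) ^ 2 * D * E, mul_ne_zero (mul_ne_zero (pow_ne_zero 2 hne) hD) hE, fun z hz ↦ ?_⟩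
    have hz1 : z ∉ L.lattice := by simpa using hz 1 le_rfl (by omega)
    have hzm := hz m (by omega) (by omega)
    have hzm1 := hz (m - 1) (by omega) (by omega)
    have hzm2 := hz (m + 1) (by omega) (by omega)
    have e4 : ((m - 1 : ℕ) : ℂ) * z = m * z - z := by
      rw [Nat.cast_sub (by omega)]; push_cast; ring
    have e5 : ((m + 1 : ℕ) : ℂ) * z = m * z + z := by push_cast; ring
    rw [e4] at hzm1
    rw [e5] at hzm2
    have f1 := hU z fun k h h' ↦ hz k h (by omega)
    have f2 := hM z fun k h h' ↦ hz k h (by omega)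
    have f3 := wP_add_sub L hz1 hzm hzm1 hzm2
    rw [e4] at f2
    rw [e5]
    simp only [map_sub, map_add, map_mul, map_pow, aeval_X, aeval_C, map_ofNat, e2, e3, map_div₀]
    rw [← f1, ← f2]
    linear_combination (aeval (weierstrassP L z) E * aeval (weierstrassP L z) D ^ 3) * f3

/-- The values of `℘` at torsion points are algebraic if `g₂` and `g₃` are. -/
lemma torsion_algebraic (L : PeriodPair) (h2 : L.g₂ ∈ Kalg) (h3 : L.g₃ ∈ Kalg) {n : ℕ}
    (hn : 1 ≤ n) {t : ℂ} (ht : t ∉ L.lattice) (hnt : (n : ℂ) * t ∈ L.lattice) :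
    weierstrassP L t ∈ Kalg := by
  obtain ⟨N, D, hD, h⟩ := exists_mul_poly L h2 h3 n hn
  have hn0 : (n : ℂ) ≠ 0 := by norm_cast; omega
  have hc : ∀ P : Polynomial ↥Kalg, Tendsto (fun z ↦ Polynomial.aeval (weierstrassP L z) P) (𝓝[≠] t)
      (𝓝 (Polynomial.aeval (weierstrassP L t) P)) := fun P ↦ by
    have := (P.continuous_aeval (A := ℂ)).continuousAt.comp (wP_analyticAt L ht).continuousAt
    exact this.tendsto.mono_left nhdsWithin_le_nhds
  have a1 : Tendsto (fun z ↦ (n : ℂ) * z + -(n * t)) (𝓝[≠] t) (𝓝[≠] 0) := by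
    have := (tendsto_add_punctured ((n : ℂ) * t) (-(n * t))).comp (tendsto_mul_punctured hn0 t)
    rwa [add_neg_cancel] at this
  have hinf : Tendsto (fun z ↦ (weierstrassP L (n * z))⁻¹) (𝓝[≠] t) (𝓝 0) := by
    have a2 := (tendsto_wP L).comp a1
    have a3 := tendsto_inv_atTop_zero.comp a2
    rw [tendsto_zero_iff_norm_tendsto_zero]
    refine a3.congr fun z ↦ ?_
    simp only [Function.comp_apply, wP_add (L.lattice.neg_mem hnt), norm_inv]
  have hlim := (hc N).mul hinf
  rw [mul_zero] at hlim
  have hD0 : Polynomial.aeval (weierstrassP L t) D = 0 := by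
    refine tendsto_nhds_unique ((hc D).congr' ?_) hlim
    have a4 : ∀ᶠ z in 𝓝[≠] t, weierstrassP L (n * z) ≠ 0 := by
      have a5 := poly_wP_ne_zero_zero L Polynomial.X_ne_zero
      filter_upwards [a1.eventually a5] with z hz
      rwa [wP_add (L.lattice.neg_mem hnt), Polynomial.eval_X] at hz
    filter_upwards [a4, compl_punctured_forall_mul L n t] with z hz hz'
    rw [← h z hz', mul_assoc, mul_inv_cancel₀ hz, mul_one]
  have : Algebra.IsAlgebraic ℚ ↥Kalg := by
    convert! algebraicClosure.isAlgebraic ℚ ℂ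
  have : IsAlgebraic ↥Kalg (weierstrassP L t) := ⟨D, hD, hD0⟩
  exact mem_Kalg.mpr (this.restrictScalars ℚ)

/-! ### Complex multiplications -/

lemma torsion_algebraic_int (L : PeriodPair) (h2 : L.g₂ ∈ Kalg) (h3 : L.g₃ ∈ Kalg) {n : ℤ}
    (hn : n ≠ 0) {t : ℂ} (ht : t ∉ L.lattice) (hnt : (n : ℂ) * t ∈ L.lattice) :
    weierstrassP L t ∈ Kalg := by
  obtain ⟨m, rfl | rfl⟩ := n.eq_nat_or_neg
  · exact torsion_algebraic L h2 h3 (n := m) (by omega) ht (by exact_mod_cast hnt)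
  · refine torsion_algebraic L h2 h3 (n := m) (by omega) ht ?_
    have := L.lattice.neg_mem hnt
    push_cast at this
    rwa [neg_mul, neg_neg] at this

/-- `β` stabilizes the lattice. -/
def IsEnd (L : PeriodPair) (β : ℂ) : Prop := ∀ w ∈ L.lattice, β * w ∈ L.lattice

lemma indep_int (L : PeriodPair) {a b a' b' : ℤ}
    (h : (a : ℂ) * L.ω₁ + b * L.ω₂ = a' * L.ω₁ + b' * L.ω₂) : a = a' ∧ b = b' := by
  have h1 := LinearIndependent.pair_iff.mp L.indep ((a - a' : ℤ) : ℝ) ((b - b' : ℤ) : ℝ) (by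
    simp only [Complex.real_smul]
    push_cast
    linear_combination h)
  simp only [Int.cast_eq_zero, sub_eq_zero] at h1
  exact h1

lemma ω₁_ne_zero (L : PeriodPair) : L.ω₁ ≠ 0 := fun h ↦ by
  have := indep_int L (a := 1) (b := 0) (a' := 0) (b' := 0) (by simp [h])
  simp at this

lemma ω₂_ne_zero (L : PeriodPair) : L.ω₂ ≠ 0 := fun h ↦ by
  have := indep_int L (a := 0) (b := 1) (a' := 0) (b' := 0) (by simp [h])
  simp at this

lemma IsEnd.intCast (L : PeriodPair) (m : ℤ) : IsEnd L m := fun w hw ↦ by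
  simpa using L.lattice.smul_mem m hw

lemma IsEnd.sub {L : PeriodPair} {β γ : ℂ} (h : IsEnd L β) (h' : IsEnd L γ) : IsEnd L (β - γ) :=
  fun w hw ↦ by rw [sub_mul]; exact L.lattice.sub_mem (h w hw) (h' w hw)

lemma IsEnd.mul {L : PeriodPair} {β γ : ℂ} (h : IsEnd L β) (h' : IsEnd L γ) : IsEnd L (β * γ) :=
  fun w hw ↦ by rw [mul_assoc]; exact h _ (h' w hw)

/-- The integer matrix of an endomorphism, and its characteristic equation. -/
lemma IsEnd.exists_matrix {L : PeriodPair} {β : ℂ} (h : IsEnd L β) :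
    ∃ a b c d : ℤ, β * L.ω₁ = a * L.ω₁ + b * L.ω₂ ∧ β * L.ω₂ = c * L.ω₁ + d * L.ω₂ ∧
      (β - a) * (β - d) = b * c := by
  obtain ⟨a, b, h1⟩ := L.mem_lattice.mp (h _ (L.ω₁_mem_lattice))
  obtain ⟨c, d, h2⟩ := L.mem_lattice.mp (h _ (L.ω₂_mem_lattice))
  refine ⟨a, b, c, d, h1.symm, h2.symm, ?_⟩
  refine mul_right_cancel₀ (mul_ne_zero (ω₁_ne_zero L) (ω₂_ne_zero L)) ?_
  linear_combination (-(β - a) * L.ω₁) * h2 - c * L.ω₁ * h1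

/-- A nonzero endomorphism divides a nonzero integer in the endomorphism ring. -/
lemma IsEnd.exists_conj {L : PeriodPair} {β : ℂ} (h : IsEnd L β) (h0 : β ≠ 0) :
    ∃ (γ : ℂ) (N : ℤ), IsEnd L γ ∧ N ≠ 0 ∧ γ * β = N := by
  obtain ⟨a, b, c, d, h1, h2, h3⟩ := h.exists_matrix
  refine ⟨((a + d : ℤ) : ℂ) - β, a * d - b * c, (IsEnd.intCast L _).sub h, fun hN ↦ ?_, ?_⟩
  · have hz : (((a + d : ℤ) : ℂ) - β) * β = 0 := by
      have : ((a * d - b * c : ℤ) : ℂ) = 0 := by rw [hN]; simp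
      push_cast at this ⊢
      linear_combination this - h3
    have hβ : β = ((a + d : ℤ) : ℂ) :=
      (sub_eq_zero.mp ((mul_eq_zero.mp hz).resolve_right h0)).symm
    have i1 := indep_int L (a := a + d) (b := 0) (a' := a) (b' := b) (by rw [← hβ, ← h1]; simp)
    have i2 := indep_int L (a := 0) (b := a + d) (a' := c) (b' := d) (by rw [← hβ, ← h2]; simp)
    have : a + d = 0 := by omega
    rw [this] at hβ
    exact h0 (by simpa using hβ)
  · push_cast
    linear_combination -h3

/-- The preimage `β⁻¹Ω` of the lattice. -/
def pre (L : PeriodPair) (β : ℂ) : Set ℂ := {u | β * u ∈ L.lattice}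

lemma isOpen_compl_pre (L : PeriodPair) (β : ℂ) : IsOpen (pre L β)ᶜ :=
  (isOpen_compl_lattice L).preimage (continuous_const_mul β)

lemma countable_pre (L : PeriodPair) {β : ℂ} (h0 : β ≠ 0) : (pre L β).Countable :=
  (countable_lattice L).preimage (mul_right_injective₀ h0)

/-- A finite set of representatives of `β⁻¹Ω` modulo `Ω`. -/
lemma exists_reps {L : PeriodPair} {β : ℂ} (h : IsEnd L β) (h0 : β ≠ 0) :
    ∃ T : Finset ℂ, 0 ∈ T ∧ (∀ t ∈ T, t ∈ pre L β) ∧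
      (∀ u ∈ pre L β, ∃ t ∈ T, u - t ∈ L.lattice) ∧
      (∀ t ∈ T, ∀ t' ∈ T, t - t' ∈ L.lattice → t = t') := by
  classical
  obtain ⟨γ, N, hγ, hN, hγβ⟩ := h.exists_conj h0
  have hNC : (N : ℂ) ≠ 0 := by exact_mod_cast hN
  let r : ℤ × ℤ → ℂ := fun x ↦ (x.1 * L.ω₁ + x.2 * L.ω₂) / N
  let I := Finset.Ico (0 : ℤ) |N|
  refine ⟨((I ×ˢ I).image r).filter (· ∈ pre L β), ?_, fun t ht ↦ (Finset.mem_filter.mp ht).2,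
    fun u hu ↦ ?_, fun t ht t' ht' htt ↦ ?_⟩
  · refine Finset.mem_filter.mpr ⟨Finset.mem_image.mpr ⟨(0, 0), ?_, by simp [r]⟩, by simp [pre]⟩
    simp [I, hN]
  · have hNu : (N : ℂ) * u ∈ L.lattice := by
      rw [← hγβ, mul_assoc]; exact hγ _ hu
    obtain ⟨a, b, hab⟩ := L.mem_lattice.mp hNu
    have hu' : u - r (a % N, b % N) ∈ L.lattice := by
      refine L.mem_lattice.mpr ⟨a / N, b / N, ?_⟩
      have ha : ((a % N : ℤ) : ℂ) + N * (a / N : ℤ) = a := by exact_mod_cast Int.emod_add_mul_ediv a N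
      have hb : ((b % N : ℤ) : ℂ) + N * (b / N : ℤ) = b := by exact_mod_cast Int.emod_add_mul_ediv b N
      simp only [r]
      refine mul_left_cancel₀ hNC ?_
      rw [mul_sub, mul_div_cancel₀ _ hNC, ← hab]
      linear_combination L.ω₁ * ha + L.ω₂ * hb
    refine ⟨r (a % N, b % N), Finset.mem_filter.mpr ⟨Finset.mem_image.mpr ⟨_, ?_, rfl⟩, ?_⟩, hu'⟩
    · simp [I, Int.emod_nonneg _ hN, Int.emod_lt_abs _ hN]
    · have := L.lattice.sub_mem (show β * u ∈ L.lattice from hu) (h _ hu')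
      rwa [← mul_sub, sub_sub_cancel] at this
  · obtain ⟨⟨i, j⟩, hij, rfl⟩ := Finset.mem_image.mp (Finset.mem_filter.mp ht).1
    obtain ⟨⟨i', j'⟩, hij', rfl⟩ := Finset.mem_image.mp (Finset.mem_filter.mp ht').1
    obtain ⟨a, b, hab⟩ := L.mem_lattice.mp htt
    simp only [Finset.mem_product, I, Finset.mem_Ico] at hij hij'
    simp only [r] at hab
    rw [← sub_div, eq_div_iff hNC] at hab
    have := indep_int L (a := a * N) (b := b * N) (a' := i - i') (b' := j - j')
      (by push_cast; linear_combination hab)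
    have key : ∀ x y z : ℤ, 0 ≤ x → x < |N| → 0 ≤ y → y < |N| → z * N = x - y → x = y := by
      intro x y z h1 h2 h3 h4 h5
      have := Int.eq_zero_of_abs_lt_dvd (m := |N|) (x := x - y)
        ((abs_dvd _ _).mpr (h5 ▸ Dvd.intro_left _ rfl)) (by rw [abs_lt]; constructor <;> omega)
      omega
    rw [key i i' a hij.1.1 hij.1.2 hij'.1.1 hij'.1.2 this.1,
      key j j' b hij.2.1 hij.2.2 hij'.2.1 hij'.2.2 this.2]

/-- `β² ℘(βz)` is, up to a constant, the sum of the translates of `℘` by `β⁻¹Ω / Ω`. -/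
lemma exists_wP_mul {L : PeriodPair} {β : ℂ} (h : IsEnd L β) (h0 : β ≠ 0) {T : Finset ℂ}
    (hT : ∀ t ∈ T, t ∈ pre L β) (hT1 : ∀ u ∈ pre L β, ∃ t ∈ T, u - t ∈ L.lattice)
    (hT2 : ∀ t ∈ T, ∀ t' ∈ T, t - t' ∈ L.lattice → t = t') :
    ∃ c, ∀ z ∉ pre L β, β ^ 2 * weierstrassP L (β * z) = ∑ t ∈ T, weierstrassP L (z - t) + c := by
  classical
  have hpT : ∀ z ∉ pre L β, ∀ t ∈ T, z - t ∉ L.lattice := fun z hz t ht hmem ↦ hz (by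
    have := L.lattice.add_mem (h _ hmem) (hT t ht)
    rwa [← mul_add, sub_add_cancel] at this)
  let f : ℂ → ℂ := fun z ↦ β ^ 2 * weierstrassP L (β * z) - ∑ t ∈ T, weierstrassP L (z - t)
  have han : ∀ z ∉ pre L β, AnalyticAt ℂ f z := by
    intro z hz
    have a1 : AnalyticAt ℂ (fun z ↦ weierstrassP L (β * z)) z :=
      (wP_analyticAt L hz).fun_comp_of_eq (by fun_prop) rfl
    have a2 : AnalyticAt ℂ (fun z ↦ ∑ t ∈ T, weierstrassP L (z - t)) z :=
      Finset.analyticAt_fun_sum _ fun t ht ↦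
        (wP_analyticAt L (hpT z hz t ht)).fun_comp_of_eq (by fun_prop) rfl
    exact (analyticAt_const.fun_mul a1).fun_sub a2
  have hrem : ∀ z₀, Rem f z₀ := by
    intro z₀
    by_cases hz₀ : z₀ ∈ pre L β
    · obtain ⟨t₀, ht₀, ht₀'⟩ := hT1 z₀ hz₀
      let p := weierstrassPExcept L 0
      have hp : AnalyticAt ℂ p 0 := by simpa using L.analyticAt_weierstrassPExcept 0
      have a1 : AnalyticAt ℂ (fun z ↦ p (β * (z - z₀))) z₀ :=
        hp.fun_comp_of_eq (by fun_prop) (by simp)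
      have a2 : AnalyticAt ℂ (fun z ↦ p (z - z₀)) z₀ := hp.fun_comp_of_eq (by fun_prop) (by simp)
      have a3 : AnalyticAt ℂ (fun z ↦ ∑ t ∈ T.erase t₀, weierstrassP L (z - t)) z₀ := by
        refine Finset.analyticAt_fun_sum _ fun t ht ↦ ?_
        refine (wP_analyticAt L fun hmem ↦ ?_).fun_comp_of_eq (y := z₀ - t) (by fun_prop) rfl
        refine Finset.ne_of_mem_erase ht (hT2 t (Finset.mem_of_mem_erase ht) t₀ ht₀ ?_)
        rw [show t - t₀ = (z₀ - t₀) - (z₀ - t) by ring]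
        exact L.lattice.sub_mem ht₀' hmem
      refine (Rem.of_analyticAt (((analyticAt_const (v := β ^ 2)).fun_mul a1).fun_sub
        a2 |>.fun_sub a3)).congr ?_
      filter_upwards [self_mem_nhdsWithin] with z hz
      have hz : z - z₀ ≠ 0 := sub_ne_zero.mpr hz
      simp only [f]
      rw [← Finset.add_sum_erase T _ ht₀]
      have e1 : weierstrassP L (β * z) = weierstrassP L (β * (z - z₀)) := by
        rw [← wP_add (L := L) hz₀ (β * (z - z₀))]; congr 1; ring
      have e2 : weierstrassP L (z - t₀) = weierstrassP L (z - z₀) := by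
        rw [← wP_add (L := L) ht₀' (z - z₀)]; congr 1; ring
      rw [e1, e2, weierstrassP_eq L (β * (z - z₀)), weierstrassP_eq L (z - z₀)]
      field_simp
      ring
    · exact .of_analyticAt (han z₀ hz₀)
  obtain ⟨c, hc⟩ := liouville L hrem fun ω hω z₀ ↦ .of_forall fun z ↦ by
    simp only [f]
    rw [mul_add, wP_add (h ω hω)]
    congr 1
    refine Finset.sum_congr rfl fun t _ ↦ ?_
    rw [add_sub_right_comm, wP_add hω]
  refine ⟨c, fun z hz ↦ ?_⟩
  have := eq_of_eventuallyEq_punctured (han z hz).continuousAt continuousAt_const (hc z)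
  simp only [f] at this
  linear_combination this

open Polynomial in
/-- Multiplication by `β`: `ζ(βz)` in terms of `z`, `ζ(z)`, `℘(z)`, `℘'(z)`. The constants are
algebraic because they can be computed from torsion values of `℘`; the integer `n` is the norm of
`β`. -/
lemma exists_zt_mul {L : PeriodPair} (h2 : L.g₂ ∈ Kalg) (h3 : L.g₃ ∈ Kalg) {β : ℂ}
    (h : IsEnd L β) (h0 : β ≠ 0) (hβ : β ∈ Kalg) :
    ∃ c ∈ Kalg, ∃ n : ℕ, 1 ≤ n ∧ ∃ P : (↥Kalg)[X], P ≠ 0 ∧ ∀ z ∉ pre L β,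
      aeval (weierstrassP L z) P * (2 * β * zt L (β * z) - 2 * n * zt L z + 2 * c * z) =
        derivWeierstrassP L z * aeval (weierstrassP L z) (derivative P) := by
  classical
  obtain ⟨T, hT0, hT, hT1, hT2⟩ := exists_reps h h0
  obtain ⟨c, hc⟩ := exists_wP_mul h h0 hT hT1 hT2
  obtain ⟨γ, N, hγ, hN, hγβ⟩ := h.exists_conj h0
  have hNC : (N : ℂ) ≠ 0 := by exact_mod_cast hN
  have hpre : ∀ u ∈ pre L β, (N : ℂ) * u ∈ L.lattice := fun u hu ↦ by
    rw [← hγβ, mul_assoc]; exact hγ _ hu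
  have hpT : ∀ z ∉ pre L β, ∀ t ∈ T, z - t ∉ L.lattice := fun z hz t ht hmem ↦ hz (by
    have := L.lattice.add_mem (h _ hmem) (hT t ht)
    rwa [← mul_add, sub_add_cancel] at this)
  have hneg : ∀ z ∉ pre L β, -z ∉ pre L β := fun z hz hmem ↦ hz (by
    have := L.lattice.neg_mem hmem
    rwa [mul_neg, neg_neg] at this)
  have hpT' : ∀ z ∉ pre L β, ∀ t ∈ T, z + t ∉ L.lattice := fun z hz t ht ↦ by
    have := neg_notMem (hpT _ (hneg z hz) t ht)
    rwa [show -(-z - t) = z + t by ring] at this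
  have hpL : ∀ z ∉ pre L β, z ∉ L.lattice := fun z hz hmem ↦ hz (h z hmem)
  -- torsion values are algebraic
  have htor : ∀ u ∉ L.lattice, (2 * N : ℤ) * u ∈ L.lattice → weierstrassP L u ∈ Kalg := by
    intro u hu hNu
    exact torsion_algebraic_int L h2 h3 (n := 2 * N) (by omega) hu (by exact_mod_cast hNu)
  have hcK : c ∈ Kalg := by
    have hz₁ : L.ω₁ / (2 * N : ℤ) ∉ pre L β := fun hmem ↦ by
      have := hpre _ hmem
      obtain ⟨a, b, hab⟩ := L.mem_lattice.mp this
      have := indep_int L (a := 2 * a) (b := 2 * b) (a' := 1) (b' := 0) (by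
        push_cast at hab ⊢
        field_simp at hab
        linear_combination hab)
      omega
    have h2N : ((2 * N : ℤ) : ℂ) ≠ 0 := by exact_mod_cast (by omega)
    have hz₂ : ((2 * N : ℤ) : ℂ) * (L.ω₁ / (2 * N : ℤ)) = L.ω₁ := mul_div_cancel₀ _ h2N
    have hc1 := hc _ hz₁
    rw [show c = β ^ 2 * weierstrassP L (β * (L.ω₁ / (2 * N : ℤ))) -
      ∑ t ∈ T, weierstrassP L (L.ω₁ / (2 * N : ℤ) - t) by linear_combination -hc1]
    refine sub_mem (mul_mem (pow_mem hβ 2) (htor _ hz₁ ?_)) (sum_mem fun t ht ↦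
      htor _ (hpT _ hz₁ t ht) ?_)
    · rw [mul_left_comm, hz₂]; exact h _ L.ω₁_mem_lattice
    · rw [mul_sub, hz₂]
      refine L.lattice.sub_mem L.ω₁_mem_lattice ?_
      have := IsEnd.intCast L 2 _ (hpre t (hT t ht))
      rw [← mul_assoc] at this
      exact_mod_cast this
  -- integrate the relation for `℘`
  have h_integrated : ∀ z ∉ pre L β, 2 * β * zt L (β * z) =
      ∑ t ∈ T, (zt L (z - t) + zt L (z + t)) - 2 * c * z := by
    let F : ℂ → ℂ := fun z ↦ 2 * β * zt L (β * z) -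
      ∑ t ∈ T, (zt L (z - t) + zt L (z + t)) + 2 * c * z
    have hF : ∀ z ∉ pre L β, HasDerivAt F 0 z := by
      intro z hz
      have d1 := (HasDerivAt.comp (h := fun z : ℂ ↦ β * z) (h₂ := zt L) z
        (wZeta_hasDerivAt L hz) ((hasDerivAt_id z).const_mul β)).const_mul (2 * β)
      have d2 := HasDerivAt.fun_sum fun t (ht : t ∈ T) ↦
        ((wZeta_hasDerivAt L (hpT z hz t ht)).comp_sub_const z t).fun_add
          ((wZeta_hasDerivAt L (hpT' z hz t ht)).comp_add_const z t)
      have d3 := (hasDerivAt_id z).const_mul (2 * c)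
      have e1 := hc z hz
      have e2 := hc (-z) (hneg z hz)
      rw [mul_neg, L.weierstrassP_neg] at e2
      have e3 : ∑ t ∈ T, weierstrassP L (-z - t) = ∑ t ∈ T, weierstrassP L (z + t) :=
        Finset.sum_congr rfl fun t _ ↦ by rw [← L.weierstrassP_neg]; congr 1; ring
      rw [e3] at e2
      convert! (d1.sub d2).add d3 using 1
      rw [Finset.sum_add_distrib, Finset.sum_neg_distrib, Finset.sum_neg_distrib]
      linear_combination e1 + e2
    have hodd : ∀ z ∉ pre L β, F (-z) = -F z := by
      intro z hz
      simp only [F]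
      rw [mul_neg, zt_neg L hz]
      have : ∑ t ∈ T, (zt L (-z - t) + zt L (-z + t)) = -∑ t ∈ T, (zt L (z - t) + zt L (z + t)) := by
        rw [← Finset.sum_neg_distrib]
        refine Finset.sum_congr rfl fun t ht ↦ ?_
        rw [show -z - t = -(z + t) by ring, show -z + t = -(z - t) by ring,
          zt_neg L (hpT z hz t ht), zt_neg L (hpT' z hz t ht)]
        ring
      rw [this]; ring
    intro z hz
    have h4 := eq_of_deriv_eq_on_compl (countable_pre L h0) (isOpen_compl_pre L β) hF hz (hneg z hz)
    rw [hodd z hz] at h4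
    simp only [F] at h4
    linear_combination h4 / 2
  have hTL : ∀ t ∈ T.erase 0, t ∉ L.lattice := fun t ht hmem ↦
    Finset.ne_of_mem_erase ht (hT2 t (Finset.mem_of_mem_erase ht) 0 hT0 (by simpa using hmem))
  have hTK : ∀ t ∈ T.erase 0, weierstrassP L t ∈ Kalg := fun t ht ↦ htor t (hTL t ht) (by
    have := IsEnd.intCast L 2 _ (hpre t (hT t (Finset.mem_of_mem_erase ht)))
    rw [← mul_assoc] at this
    exact_mod_cast this)
  let x : ℂ → ↥Kalg := fun t ↦ if ht : weierstrassP L t ∈ Kalg then ⟨_, ht⟩ else 0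
  have hx : ∀ t ∈ T.erase 0, algebraMap ↥Kalg ℂ (x t) = weierstrassP L t := fun t ht ↦ by
    simp only [x, dif_pos (hTK t ht)]; rfl
  refine ⟨c, hcK, T.card, Finset.card_pos.mpr ⟨0, hT0⟩, ∏ t ∈ T.erase 0, (X - C (x t)),
    (monic_prod_X_sub_C _ _).ne_zero, fun z hz ↦ ?_⟩
  have hsum : 2 * β * zt L (β * z) - 2 * T.card * zt L z + 2 * c * z =
      ∑ t ∈ T.erase 0, (zt L (z - t) + zt L (z + t) - 2 * zt L z) := by
    rw [h_integrated z hz, ← Finset.add_sum_erase T _ hT0, Finset.sum_sub_distrib, Finset.sum_const,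
      Finset.card_erase_of_mem hT0, nsmul_eq_mul, Nat.cast_sub (Finset.card_pos.mpr ⟨0, hT0⟩)]
    simp only [sub_zero, add_zero]
    push_cast
    ring
  rw [hsum, derivative_prod_finset, map_sum, Finset.mul_sum, Finset.mul_sum]
  refine Finset.sum_congr rfl fun t ht ↦ ?_
  rw [← Finset.mul_prod_erase _ _ ht, derivative_X_sub_C, mul_one]
  simp only [map_mul, map_sub, aeval_X, aeval_C, hx t ht]
  have := zt_add_sub L (hTL t ht) (hpL z hz) (hpT z hz t (Finset.mem_of_mem_erase ht))
    (hpT' z hz t (Finset.mem_of_mem_erase ht))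
  linear_combination (aeval (weierstrassP L z) (∏ t ∈ (T.erase 0).erase t, (X - C (x t)))) * this

/-! ### Transcendence degree bookkeeping -/

/-- The algebraic closure of `ℚ(S)` in `ℂ`. -/
def acl (S : Set ℂ) : IntermediateField ℚ ℂ :=
  (algebraicClosure (IntermediateField.adjoin ℚ S) ℂ).restrictScalars ℚ

lemma mem_acl {S : Set ℂ} {x : ℂ} : x ∈ acl S ↔ IsAlgebraic (IntermediateField.adjoin ℚ S) x := by
  rw [acl, IntermediateField.mem_restrictScalars, mem_algebraicClosure_iff]

open IntermediateField.algebraAdjoinAdjoin in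
lemma mem_acl' {S : Set ℂ} {x : ℂ} : x ∈ acl S ↔ IsAlgebraic (Algebra.adjoin ℚ S) x := by
  rw [mem_acl]
  exact (IsFractionRing.isAlgebraic_iff _ (IntermediateField.adjoin ℚ S) ℂ).symm

lemma subset_acl {S : Set ℂ} {x : ℂ} (h : x ∈ S) : x ∈ acl S :=
  mem_acl'.2 (isAlgebraic_algebraMap (⟨x, Algebra.subset_adjoin h⟩ : Algebra.adjoin ℚ S))

lemma Kalg_le_acl {S : Set ℂ} {x : ℂ} (h : x ∈ Kalg) : x ∈ acl S :=
  mem_acl.2 ((mem_Kalg.1 h).tower_top _)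

lemma acl_of_sq {S : Set ℂ} {x : ℂ} (h : x ^ 2 ∈ acl S) : x ∈ acl S :=
  mem_acl.2 ((mem_acl.1 h).of_pow two_pos)

lemma aeval_mem {A : IntermediateField ℚ ℂ} (hA : Kalg ≤ A) {x : ℂ} (h : x ∈ A)
    (P : Polynomial Kalg) : Polynomial.aeval x P ∈ A := by
  rw [Polynomial.aeval_eq_sum_range]
  refine sum_mem fun i _ ↦ ?_
  rw [Algebra.smul_def]
  exact mul_mem (hA (P.coeff i).2) (pow_mem h i)

lemma aeval_mem_acl {S : Set ℂ} {x : ℂ} (h : x ∈ acl S) (P : Polynomial Kalg) :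
    Polynomial.aeval x P ∈ acl S :=
  aeval_mem (fun _ ↦ Kalg_le_acl) h P

/-- The transcendence degree of `acl S` is at most the cardinality of `S`. -/
lemma card_le_of_mem_acl {S : Finset ℂ} {d : ℕ} {x : Fin d → ℂ} (hx : AlgebraicIndependent ℚ x)
    (h : ∀ i, x i ∈ acl S) : d ≤ S.card := by
  let M := AlgebraicIndependent.matroid ℚ ℂ
  have h1 : M.Indep (Set.range x) := by
    rw [AlgebraicIndependent.matroid_indep_iff]
    exact hx.coe_range
  have h2 : Set.range x ⊆ M.closure S := by
    rw [AlgebraicIndependent.matroid_closure_eq]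
    rintro _ ⟨i, rfl⟩
    exact mem_acl'.1 (h i)
  have h3 := (M.eRk_mono h2).trans (M.eRk_closure_eq _ |>.trans_le (M.eRk_le_encard _))
  rw [h1.eRk_eq_encard, ← Set.image_univ, hx.injective.encard_image, Set.encard_univ,
    Set.encard_coe_eq_coe_finsetCard] at h3
  simpa using h3

lemma mem_Kalg_of_aeval_eq_zero {x : ℂ} {P : Polynomial Kalg} (hP : P ≠ 0)
    (h : Polynomial.aeval x P = 0) : x ∈ Kalg := by
  have : Algebra.IsAlgebraic ℚ ↥Kalg := by convert! algebraicClosure.isAlgebraic ℚ ℂ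
  have hx : IsAlgebraic Kalg x := ⟨P, hP, h⟩
  exact mem_Kalg.2 (hx.restrictScalars ℚ)

/-- Away from the torsion points, `℘(nz)` is a rational function of `℘(z)` over `ℚ̄`: after
cancelling common factors, its denominator has no zero at `℘(z)`. -/
lemma wP_mul_mem {L : PeriodPair} (h2 : L.g₂ ∈ Kalg) (h3 : L.g₃ ∈ Kalg)
    {A : IntermediateField ℚ ℂ} (hA : Kalg ≤ A) {n : ℕ} (hn : 1 ≤ n) {z : ℂ}
    (hz : ∀ k : ℕ, 1 ≤ k → k ≤ n → (k : ℂ) * z ∉ L.lattice) (hx : weierstrassP L z ∈ A) :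
    weierstrassP L (n * z) ∈ A := by
  obtain ⟨N, D, hD, h⟩ := exists_mul_poly L h2 h3 n hn
  set G := EuclideanDomain.gcd N D with hG
  obtain ⟨N', hN'⟩ := EuclideanDomain.gcd_dvd_left N D
  obtain ⟨D', hD'⟩ := EuclideanDomain.gcd_dvd_right N D
  rw [← hG] at hN' hD'
  have hG0 : G ≠ 0 := fun h0 ↦ hD (by rw [hD', h0, zero_mul])
  have hcop : IsCoprime N' D' := by
    refine ⟨EuclideanDomain.gcdA N D, EuclideanDomain.gcdB N D, mul_left_cancel₀ hG0 ?_⟩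
    have := EuclideanDomain.gcd_eq_gcd_ab N D
    rw [← hG] at this
    linear_combination -this - EuclideanDomain.gcdA N D * hN' - EuclideanDomain.gcdB N D * hD'
  have hzL : z ∉ L.lattice := by simpa using hz 1 le_rfl hn
  have hn0 : (n : ℂ) ≠ 0 := by norm_cast; omega
  have hc : ∀ P : Polynomial ↥Kalg,
      ContinuousAt (fun u ↦ Polynomial.aeval (weierstrassP L u) P) z := fun P ↦
    ((P.continuous_aeval (A := ℂ)).continuousAt.comp (wP_analyticAt L hzL).continuousAt :)
  have hcn : ContinuousAt (fun u ↦ weierstrassP L (n * u)) z :=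
    ContinuousAt.comp (f := fun u ↦ (n : ℂ) * u) (g := weierstrassP L)
      (wP_analyticAt L (hz n hn le_rfl)).continuousAt (by fun_prop)
  have hmap : G.map (algebraMap ↥Kalg ℂ) ≠ 0 :=
    (Polynomial.map_ne_zero_iff (algebraMap ↥Kalg ℂ).injective).mpr hG0
  have key : Polynomial.aeval (weierstrassP L z) D' * weierstrassP L (n * z) =
      Polynomial.aeval (weierstrassP L z) N' := by
    refine eq_of_eventuallyEq_punctured (f := fun u ↦ Polynomial.aeval (weierstrassP L u) D' *
      weierstrassP L (n * u)) ((hc D').mul hcn) (hc N') ?_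
    filter_upwards [poly_wP_ne_zero L hmap hzL, compl_punctured_forall_mul L n z] with u hu hu'
    rw [Polynomial.eval_map_algebraMap] at hu
    have := h u hu'
    rw [hN', hD', map_mul, map_mul, mul_assoc] at this
    exact mul_left_cancel₀ hu this
  have hne : Polynomial.aeval (weierstrassP L z) D' ≠ 0 := by
    intro h0
    obtain ⟨a, b, hab⟩ := hcop
    have := congrArg (Polynomial.aeval (weierstrassP L z)) hab
    rw [map_add, map_mul, map_mul, ← key, h0] at this
    simp at this
  rw [eq_div_of_mul_eq hne ((mul_comm _ _).trans key)]
  exact div_mem (aeval_mem hA hx _) (aeval_mem hA hx _)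

/-! ### Zeta values at endomorphism multiples of a point -/

/-- A combination of `ζ(βu)` and `ζ(γu)` has a genuine pole at the points of `β⁻¹Ω ∖ γ⁻¹Ω`, so its
square is not constant near such a point. -/
lemma zt_comb_pole (L : PeriodPair) {β γ a b C u₀ : ℂ} (hβ : β ≠ 0) (ha : a ≠ 0)
    (h1 : β * u₀ ∈ L.lattice) (h2 : γ * u₀ ∉ L.lattice)
    (h : ∀ᶠ u in 𝓝[≠] u₀, (a * zt L (β * u) + b * zt L (γ * u)) ^ 2 = C) : False := by
  obtain ⟨g, hg, hgz⟩ := zt_pole L h1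
  have hgc : ContinuousAt (fun u ↦ g (β * u)) u₀ :=
    ContinuousAt.comp (f := fun u ↦ β * u) (g := g) hg.continuousAt (by fun_prop)
  have hzc : ContinuousAt (fun u ↦ zt L (γ * u)) u₀ :=
    ContinuousAt.comp (f := fun u ↦ γ * u) (g := zt L) (zt_analyticAt L h2).continuousAt
      (by fun_prop)
  have hlim : Tendsto (fun u ↦ (a / β + (u - u₀) * (a * g (β * u) + b * zt L (γ * u))) ^ 2
      - (u - u₀) ^ 2 * C) (𝓝[≠] u₀) (𝓝 ((a / β) ^ 2)) := by
    have : ContinuousAt (fun u ↦ (a / β + (u - u₀) * (a * g (β * u) + b * zt L (γ * u))) ^ 2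
      - (u - u₀) ^ 2 * C) u₀ := by fun_prop
    have := this.tendsto
    simp only [sub_self, zero_mul, add_zero, ne_eq, OfNat.ofNat_ne_zero, not_false_eq_true,
      zero_pow, sub_zero] at this
    exact this.mono_left nhdsWithin_le_nhds
  have hzero : Tendsto (fun u ↦ (a / β + (u - u₀) * (a * g (β * u) + b * zt L (γ * u))) ^ 2
      - (u - u₀) ^ 2 * C) (𝓝[≠] u₀) (𝓝 0) := by
    refine tendsto_const_nhds.congr' ?_
    filter_upwards [h, compl_punctured_mul L hβ u₀, self_mem_nhdsWithin] with u hu hu1 hu2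
    have hne : u - u₀ ≠ 0 := sub_ne_zero.mpr hu2
    have : (u - u₀) * zt L (β * u) = 1 / β + (u - u₀) * g (β * u) := by
      rw [hgz _ hu1, ← mul_sub]
      field_simp
    rw [← hu]
    linear_combination (a * (a / β + (u - u₀) * (a * g (β * u) + b * zt L (γ * u))
      + (u - u₀) * (a * zt L (β * u) + b * zt L (γ * u)))) * this
  have := tendsto_nhds_unique hlim hzero
  exact div_ne_zero ha hβ (pow_eq_zero_iff (two_ne_zero) |>.1 this)

/-- If `ζ(βz)` and `ζ(γz)` are algebraic for two endomorphisms `β`, `γ`, and `z`, `℘(z)` are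
algebraically independent, then `β⁻¹Ω ⊆ γ⁻¹Ω`. -/
lemma pre_subset {L : PeriodPair} (h2 : L.g₂ ∈ Kalg) (h3 : L.g₃ ∈ Kalg) {β γ z : ℂ}
    (hβ : IsEnd L β) (hγ : IsEnd L γ) (hβ0 : β ≠ 0) (hγ0 : γ ≠ 0) (hβK : β ∈ Kalg)
    (hγK : γ ∈ Kalg) (hzβ : z ∉ pre L β) (hzγ : z ∉ pre L γ) (hζβ : zt L (β * z) ∈ Kalg)
    (hζγ : zt L (γ * z) ∈ Kalg) (hx : weierstrassP L z ∉ Kalg)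
    (hz : z ∉ acl {weierstrassP L z}) : pre L β ⊆ pre L γ := by
  obtain ⟨c, hc, n, hn, P, hP, hPz⟩ := exists_zt_mul h2 h3 hβ hβ0 hβK
  obtain ⟨d, hd, m, hm, Q, hQ, hQz⟩ := exists_zt_mul h2 h3 hγ hγ0 hγK
  have hzL : z ∉ L.lattice := fun h ↦ hzβ (hβ _ h)
  have hnK (k : ℕ) : (k : ℂ) ∈ Kalg := natCast_mem Kalg k
  have h2K : (2 : ℂ) ∈ Kalg := by exact_mod_cast hnK 2
  have hm0 : (m : ℂ) ≠ 0 := by norm_cast; omega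
  set f : ℂ → ℂ := fun u ↦ 2 * m * β * zt L (β * u) + -(2 * n * γ) * zt L (γ * u) with hf
  set κ : ℂ := 2 * (m * c - n * d) with hκ
  set R : Polynomial ↥Kalg := (m : Polynomial ↥Kalg) * Polynomial.derivative P * Q
    - (n : Polynomial ↥Kalg) * Polynomial.derivative Q * P with hR
  have key : ∀ u ∉ pre L β, u ∉ pre L γ → Polynomial.aeval (weierstrassP L u) (P * Q) *
      (f u + κ * u) = derivWeierstrassP L u * Polynomial.aeval (weierstrassP L u) R := by
    intro u hu1 hu2
    simp only [hR, hf, hκ, map_sub, map_mul, map_natCast]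
    linear_combination (m * Polynomial.aeval (weierstrassP L u) Q) * hPz u hu1
      - (n * Polynomial.aeval (weierstrassP L u) P) * hQz u hu2
  have hPQ : P * Q ≠ 0 := mul_ne_zero hP hQ
  have hne : Polynomial.aeval (weierstrassP L z) (P * Q) ≠ 0 := fun h ↦
    hx (mem_Kalg_of_aeval_eq_zero hPQ h)
  have hfK : f z ∈ Kalg := by
    refine add_mem (mul_mem ?_ hζβ) (mul_mem (neg_mem ?_) hζγ)
    · exact mul_mem (mul_mem h2K (hnK m)) hβK
    · exact mul_mem (mul_mem h2K (hnK n)) hγK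
  have hκK : κ ∈ Kalg := mul_mem h2K (sub_mem (mul_mem (hnK m) hc) (mul_mem (hnK n) hd))
  have hxS : weierstrassP L z ∈ acl {weierstrassP L z} := subset_acl rfl
  have hdS : derivWeierstrassP L z ∈ acl {weierstrassP L z} := by
    refine acl_of_sq ?_
    rw [L.derivWeierstrassP_sq z hzL]
    refine sub_mem (sub_mem (mul_mem (ofNat_mem _ 4) (pow_mem hxS 3))
      (mul_mem (Kalg_le_acl h2) hxS)) (Kalg_le_acl h3)
  have hκ0 : κ = 0 := by
    by_contra hκ0
    refine hz ?_
    have : z = (derivWeierstrassP L z * Polynomial.aeval (weierstrassP L z) R /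
        Polynomial.aeval (weierstrassP L z) (P * Q) - f z) / κ := by
      rw [← key z hzβ hzγ]
      field_simp
      ring
    refine Set.mem_of_eq_of_mem this ?_
    exact div_mem (sub_mem (div_mem (mul_mem hdS (aeval_mem_acl hxS _)) (aeval_mem_acl hxS _))
      (Kalg_le_acl hfK)) (Kalg_le_acl hκK)
  -- the relation at `z`, squared, is an identity between polynomials in the transcendental `℘(z)`
  have hpoly : Polynomial.C (⟨f z, hfK⟩ : ↥Kalg) ^ 2 * (P * Q) ^ 2 =
      (4 * Polynomial.X ^ 3 - Polynomial.C (⟨L.g₂, h2⟩ : ↥Kalg) * Polynomial.X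
        - Polynomial.C ⟨L.g₃, h3⟩) * R ^ 2 := by
    by_contra hcon
    refine hx (mem_Kalg_of_aeval_eq_zero (sub_ne_zero.mpr hcon) ?_)
    have k1 := key z hzβ hzγ
    have k2 := L.derivWeierstrassP_sq z hzL
    rw [hκ0] at k1
    simp only [map_sub, map_mul, map_pow, Polynomial.aeval_C, Polynomial.aeval_X,
      map_ofNat] at k1 ⊢
    change (f z) ^ 2 * _ - (_ - L.g₂ * _ - L.g₃) * _ = 0
    rw [← k2, ← mul_pow, ← mul_pow, ← k1]
    ring
  have hconst : ∀ u ∉ pre L β, u ∉ pre L γ →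
      Polynomial.aeval (weierstrassP L u) (P * Q) ≠ 0 → f u ^ 2 = f z ^ 2 := by
    intro u hu1 hu2 hu3
    have k1 := key u hu1 hu2
    have k2 := L.derivWeierstrassP_sq u (fun h ↦ hu1 (hβ _ h))
    have k3 := congrArg (Polynomial.aeval (weierstrassP L u)) hpoly
    rw [hκ0] at k1
    simp only [map_sub, map_mul, map_pow, Polynomial.aeval_C, Polynomial.aeval_X,
      map_ofNat] at k1 k3 hu3
    change (f z) ^ 2 * _ = (_ - L.g₂ * _ - L.g₃) * _ at k3
    rw [← k2] at k3
    refine mul_right_cancel₀ (pow_ne_zero 2 hu3) ?_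
    rw [k3, ← mul_pow, ← mul_pow, ← k1]
    ring
  intro u hu
  by_contra huγ
  have huL : u ∉ L.lattice := fun h ↦ huγ (hγ _ h)
  refine zt_comb_pole L (a := 2 * m * β) (b := -(2 * n * γ)) (C := f z ^ 2) hβ0
    (mul_ne_zero (mul_ne_zero two_ne_zero hm0) hβ0) hu huγ ?_
  have hmap : (P * Q).map (algebraMap ↥Kalg ℂ) ≠ 0 :=
    (Polynomial.map_ne_zero_iff (algebraMap ↥Kalg ℂ).injective).mpr hPQ
  filter_upwards [poly_wP_ne_zero L hmap huL, compl_punctured_mul L hβ0 u,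
    compl_punctured_mul L hγ0 u] with v hv hv1 hv2
  rw [Polynomial.eval_map_algebraMap] at hv
  exact hconst v hv1 hv2 hv

/-! ### Automorphisms of the lattice -/

/-- An automorphism of the lattice other than `±1` is a root of unity of order `3`, `4` or `6`:
it is a nonreal root of `X² - tX + δ` with integers `t` and `δ = ±1`. -/
lemma unit_pow {L : PeriodPair} {α : ℂ} (h0 : α ≠ 0) (h : IsEnd L α) (h' : IsEnd L α⁻¹)
    (h1 : α ≠ 1) (h1' : α ≠ -1) : α ^ 4 = 1 ∨ α ^ 6 = 1 := by
  obtain ⟨a, b, c, d, e1, e2, e3⟩ := h.exists_matrix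
  obtain ⟨a', b', c', d', f1, f2, -⟩ := h'.exists_matrix
  obtain ⟨i1, i2⟩ := indep_int L (a := a' * a + b' * c) (b := a' * b + b' * d) (a' := 1) (b' := 0)
    (by
      have : L.ω₁ = α * (α⁻¹ * L.ω₁) := by field_simp
      rw [f1] at this
      push_cast
      linear_combination -this - (a' : ℂ) * e1 - b' * e2)
  obtain ⟨i3, i4⟩ := indep_int L (a := c' * a + d' * c) (b := c' * b + d' * d) (a' := 0) (b' := 1)
    (by
      have : L.ω₂ = α * (α⁻¹ * L.ω₂) := by field_simp
      rw [f2] at this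
      push_cast
      linear_combination -this - (c' : ℂ) * e1 - d' * e2)
  have hdet : (a * d - b * c) * (a' * d' - b' * c') = 1 := by
    linear_combination (c' * b + d' * d) * i1 + i4 - (c' * a + d' * c) * i2
  -- a real multiplier is an integer
  have hreal : ∀ r : ℝ, α ≠ r := by
    intro r hr
    have hb : ((-b : ℤ) : ℝ) = 0 := (LinearIndependent.pair_iff.mp L.indep (r - a) ((-b : ℤ) : ℝ) (by
      simp only [Complex.real_smul]
      push_cast
      rw [← hr]
      linear_combination e1)).2
    have hb0 : b = 0 := by simpa using hb
    have hαa : α = a := by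
      refine mul_right_cancel₀ (ω₁_ne_zero L) ?_
      rw [e1, hb0]; simp
    have hc : (c : ℂ) = 0 ∧ a = d := by
      have := indep_int L (a := 0) (b := a) (a' := c) (b' := d) (by rw [← hαa, ← e2]; simp)
      exact ⟨by exact_mod_cast this.1.symm, this.2⟩
    have hc0 : c = 0 := by exact_mod_cast hc.1
    rw [hc0, mul_zero, add_zero, mul_comm] at i1
    rcases Int.eq_one_or_neg_one_of_mul_eq_one i1 with ha | ha
    · exact h1 (by rw [hαa, ha]; simp)
    · exact h1' (by rw [hαa, ha]; simp)
  have hdisc : (a + d) ^ 2 - 4 * (a * d - b * c) < 0 := by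
    by_contra hD
    push Not at hD
    have hDr : (0 : ℝ) ≤ (((a + d) ^ 2 - 4 * (a * d - b * c) : ℤ) : ℝ) := by exact_mod_cast hD
    set s := √(((a + d) ^ 2 - 4 * (a * d - b * c) : ℤ) : ℝ) with hs
    have hsq : (s : ℂ) ^ 2 = (((a + d) ^ 2 - 4 * (a * d - b * c) : ℤ) : ℂ) := by
      rw [← Complex.ofReal_pow, hs, Real.sq_sqrt hDr]; simp
    have : (2 * α - (a + d) - s) * (2 * α - (a + d) + s) = 0 := by
      push_cast at hsq
      linear_combination 4 * e3 - hsq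
    rcases mul_eq_zero.mp this with h3 | h3
    · exact hreal ((a + d + s) / 2) (by push_cast; linear_combination h3 / 2)
    · exact hreal ((a + d - s) / 2) (by push_cast; linear_combination h3 / 2)
  have hδ : a * d - b * c = 1 := by
    rcases Int.eq_one_or_neg_one_of_mul_eq_one hdet with h3 | h3
    · exact h3
    · rw [h3] at hdisc; nlinarith [sq_nonneg (a + d)]
  have ht : a + d = -1 ∨ a + d = 0 ∨ a + d = 1 := by
    rw [hδ] at hdisc
    have u1 : a + d < 2 := by nlinarith
    have u2 : -2 < a + d := by nlinarith
    omega
  have hchar : α ^ 2 - ((a + d : ℤ) : ℂ) * α + 1 = 0 := by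
    have : ((a * d - b * c : ℤ) : ℂ) = 1 := by rw [hδ]; simp
    push_cast at this ⊢
    linear_combination e3 - this
  rcases ht with ht | ht | ht <;> rw [ht] at hchar <;> push_cast at hchar
  · right; linear_combination (α - 1) * (α ^ 3 + 1) * hchar
  · left; linear_combination (α ^ 2 - 1) * hchar
  · right; linear_combination (α + 1) * (α ^ 3 - 1) * hchar

/-- Eisenstein series are homogeneous. -/
lemma tsum_unit (L : PeriodPair) {α : ℂ} (h0 : α ≠ 0) (h : IsEnd L α) (h' : IsEnd L α⁻¹) (k : ℕ) :
    α ^ k * ∑' w : LatticePts' L.ω₁ L.ω₂, ((w : ℂ) ^ k)⁻¹ =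
      ∑' w : LatticePts' L.ω₁ L.ω₂, ((w : ℂ) ^ k)⁻¹ := by
  have hmem {β w : ℂ} (hβ : IsEnd L β) (hβ0 : β ≠ 0) (hw : w ∈ LatticePts' L.ω₁ L.ω₂) :
      β * w ∈ LatticePts' L.ω₁ L.ω₂ :=
    ⟨(mem_latticePts_iff L).mpr (hβ _ ((mem_latticePts_iff L).mp hw.1)), mul_ne_zero hβ0 hw.2⟩
  let e : LatticePts' L.ω₁ L.ω₂ ≃ LatticePts' L.ω₁ L.ω₂ :=
    { toFun := fun w ↦ ⟨α * w, hmem h h0 w.2⟩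
      invFun := fun w ↦ ⟨α⁻¹ * w, hmem h' (inv_ne_zero h0) w.2⟩
      left_inv := fun w ↦ Subtype.ext (by simp [h0])
      right_inv := fun w ↦ Subtype.ext (by simp [h0]) }
  rw [← tsum_mul_left]
  conv_lhs => rw [← e.tsum_eq]
  refine tsum_congr fun w ↦ ?_
  change α ^ k * ((α * (w : ℂ)) ^ k)⁻¹ = _
  rw [mul_pow, mul_inv, ← mul_assoc, mul_inv_cancel₀ (pow_ne_zero k h0), one_mul]

/-- If the automorphism `α` of the lattice is not `±1`, then `g₃ = 0` and `α⁴ = 1`, or `g₂ = 0` and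
`α⁶ = 1`. -/
lemma unit_cases (L : PeriodPair) {α : ℂ} (h0 : α ≠ 0) (h : IsEnd L α) (h' : IsEnd L α⁻¹)
    (h1 : α ≠ 1) (h1' : α ≠ -1) :
    (g3 L.ω₁ L.ω₂ = 0 ∧ α ^ 4 = 1) ∨ (g2 L.ω₁ L.ω₂ = 0 ∧ α ^ 6 = 1) := by
  have hsq : α ^ 2 ≠ 1 := fun h2 ↦ by
    rcases mul_eq_zero.mp (show (α - 1) * (α + 1) = 0 by linear_combination h2) with h3 | h3
    · exact h1 (sub_eq_zero.mp h3)
    · exact h1' (eq_neg_of_add_eq_zero_left h3)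
  have hg3 := tsum_unit L h0 h h' 6
  have hg2 := tsum_unit L h0 h h' 4
  rcases unit_pow h0 h h' h1 h1' with h4 | h6
  · left
    refine ⟨?_, h4⟩
    rw [show α ^ 6 = α ^ 2 by linear_combination α ^ 2 * h4] at hg3
    have : (α ^ 2 - 1) * ∑' w : LatticePts' L.ω₁ L.ω₂, ((w : ℂ) ^ 6)⁻¹ = 0 := by
      linear_combination hg3
    rw [g3, (mul_eq_zero.mp this).resolve_left (sub_ne_zero.mpr hsq), mul_zero]
  · right
    refine ⟨?_, h6⟩
    have h4 : α ^ 4 ≠ 1 := fun h4 ↦ hsq (by linear_combination h6 - α ^ 2 * h4)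
    have : (α ^ 4 - 1) * ∑' w : LatticePts' L.ω₁ L.ω₂, ((w : ℂ) ^ 4)⁻¹ = 0 := by
      linear_combination hg2
    rw [g2, (mul_eq_zero.mp this).resolve_left (sub_ne_zero.mpr h4), mul_zero]

/-! ### The two cases of the theorem -/

lemma mem_endQ_iff (L : PeriodPair) {α : ℂ} :
    α ∈ endQ L.ω₁ L.ω₂ ↔ ∃ m : ℤ, m ≠ 0 ∧ IsEnd L (m * α) := by
  simp only [endQ, IsEnd, mem_latticePts_iff, Set.mem_ofPred_eq]

/-- The field of endomorphisms is closed under quotients. -/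
lemma neg_div_mem_endQ (L : PeriodPair) {c d : ℂ} (hc : c ∈ endQ L.ω₁ L.ω₂)
    (hd : d ∈ endQ L.ω₁ L.ω₂) (hd0 : d ≠ 0) : -c / d ∈ endQ L.ω₁ L.ω₂ := by
  obtain ⟨m, hm, hmc⟩ := (mem_endQ_iff L).mp hc
  obtain ⟨n, hn, hnd⟩ := (mem_endQ_iff L).mp hd
  have hn0 : (n : ℂ) ≠ 0 := by exact_mod_cast hn
  obtain ⟨γ, N, hγ, hN, h⟩ := hnd.exists_conj (mul_ne_zero hn0 hd0)
  refine (mem_endQ_iff L).mpr ⟨m * N, mul_ne_zero hm hN, ?_⟩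
  have : ((m * N : ℤ) : ℂ) * (-c / d) = ((-n : ℤ) : ℂ) * (m * c * γ) := by
    push_cast
    rw [← h]
    field_simp
  rw [this]
  exact (IsEnd.intCast L _).mul (hmc.mul hγ)

lemma zero_mem_endQ (L : PeriodPair) : (0 : ℂ) ∈ endQ L.ω₁ L.ω₂ :=
  (mem_endQ_iff L).mpr ⟨1, one_ne_zero, fun w _ ↦ by simp⟩

lemma kLinInd_pair (L : PeriodPair) {p q : ℂ} (hp : p ≠ 0) (hq : q / p ∉ endQ L.ω₁ L.ω₂) :
    kLinInd L.ω₁ L.ω₂ ![p, q] := by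
  intro c hc h
  simp only [Fin.sum_univ_two, Matrix.cons_val_zero, Matrix.cons_val_one] at h
  have h1 : c 1 = 0 := by
    by_contra h1
    refine hq ?_
    have : q / p = -c 0 / c 1 := by
      rw [div_eq_div_iff hp h1]
      linear_combination h
    rw [this]
    exact neg_div_mem_endQ L (hc 0) (hc 1) h1
  have h0 : c 0 = 0 := by simpa [h1, hp] using h
  intro i
  fin_cases i
  · exact h0
  · exact h1

lemma schanuel_one {L : PeriodPair} (hconj : EllipticSchanuelConj L.ω₁ L.ω₂)
    (h2 : L.g₂ ∈ Kalg) (h3 : L.g₃ ∈ Kalg) {p : ℂ} (hp : p ∉ L.lattice) (hζ : zt L p ∈ Kalg)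
    (s : ℂ) (h1 : p ∈ acl {s}) (hP : weierstrassP L p ∈ acl {s}) : False := by
  have hp0 : p ≠ 0 := fun h ↦ hp (h ▸ L.lattice.zero_mem)
  obtain ⟨x, hx, hind⟩ := hconj 1 (fun _ ↦ p) (fun _ h ↦ hp ((mem_latticePts_iff L).mp h))
    (fun c _ h i ↦ by
      have : c 0 = 0 := by simpa [hp0] using h
      rw [Subsingleton.elim i 0, this])
  have := card_le_of_mem_acl (S := {s}) hind (fun i ↦ by
    rw [Finset.coe_singleton]
    rcases hx i with (((h | h) | ⟨j, h⟩) | ⟨j, h⟩) | ⟨j, h⟩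
    · rw [h, g2_eq]; exact Kalg_le_acl h2
    · rw [Set.mem_singleton_iff.mp h, g3_eq]; exact Kalg_le_acl h3
    · rw [← h]; exact h1
    · rw [← h]; dsimp only; rw [wP_eq L hp]; exact hP
    · rw [← h]; exact Kalg_le_acl hζ)
  simp at this

lemma schanuel_two {L : PeriodPair} (hconj : EllipticSchanuelConj L.ω₁ L.ω₂)
    (h2 : L.g₂ ∈ Kalg) (h3 : L.g₃ ∈ Kalg) {p q : ℂ} (hp : p ∉ L.lattice) (hq : q ∉ L.lattice)
    (hpq : q / p ∉ endQ L.ω₁ L.ω₂) {S : Finset ℂ} (hS : S.card ≤ 3)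
    (h : ∀ r ∈ ({p, q} : Set ℂ), r ∈ acl S ∧ weierstrassP L r ∈ acl S ∧ zt L r ∈ acl S) :
    False := by
  have hp0 : p ≠ 0 := fun h ↦ hp (h ▸ L.lattice.zero_mem)
  have hL : ∀ i, (![p, q] : Fin 2 → ℂ) i ∉ L.lattice := fun i ↦ by
    fin_cases i
    · exact hp
    · exact hq
  have hmem : ∀ i, (![p, q] : Fin 2 → ℂ) i ∈ ({p, q} : Set ℂ) := fun i ↦ by
    fin_cases i
    · exact Or.inl rfl
    · exact Or.inr rfl
  obtain ⟨x, hx, hind⟩ := hconj 2 ![p, q] (fun i h ↦ hL i ((mem_latticePts_iff L).mp h))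
    (kLinInd_pair L hp0 hpq)
  have := card_le_of_mem_acl (S := S) hind (fun i ↦ by
    rcases hx i with (((h' | h') | ⟨j, h'⟩) | ⟨j, h'⟩) | ⟨j, h'⟩
    · rw [h', g2_eq]; exact Kalg_le_acl h2
    · rw [Set.mem_singleton_iff.mp h', g3_eq]; exact Kalg_le_acl h3
    · rw [← h']; exact (h _ (hmem j)).1
    · rw [← h']; dsimp only; rw [wP_eq L (hL j)]; exact (h _ (hmem j)).2.1
    · rw [← h']; exact (h _ (hmem j)).2.2)
  omega

/-- The case `α ∉ k`: the conjecture is applied to `p` and `αp`, or to `p` and a torsion point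
`αp / r` when `αp` is a period. -/
lemma case_not_endQ {L : PeriodPair} (hconj : EllipticSchanuelConj L.ω₁ L.ω₂)
    (h2 : L.g₂ ∈ Kalg) (h3 : L.g₃ ∈ Kalg) {p α : ℂ} (hp : p ∉ L.lattice) (hζ : zt L p ∈ Kalg)
    (hα : α ∈ Kalg) (hα0 : α ≠ 0) (hend : α ∉ endQ L.ω₁ L.ω₂) :
    α * p ∉ L.lattice ∧ zt L (α * p) ∉ Kalg := by
  classical
  have hp0 : p ≠ 0 := fun h ↦ hp (h ▸ L.lattice.zero_mem)
  have hnot : α * p ∉ L.lattice := by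
    intro hmem
    obtain ⟨a, b, hab⟩ := L.mem_lattice.mp hmem
    set r : ℤ := |a| + |b| + 1 with hr
    have ha := abs_nonneg a
    have hb := abs_nonneg b
    have hr0 : r ≠ 0 := by omega
    have hrC : (r : ℂ) ≠ 0 := by exact_mod_cast hr0
    have hq : α * p / r ∉ L.lattice := by
      intro hq
      obtain ⟨c, d, hcd⟩ := L.mem_lattice.mp hq
      obtain ⟨e1, e2⟩ := indep_int L (a := r * c) (b := r * d) (a' := a) (b' := b) (by
        rw [hab]
        push_cast
        rw [mul_assoc, mul_assoc, ← mul_add, hcd]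
        field_simp)
      have z1 : a = 0 := Int.eq_zero_of_abs_lt_dvd ⟨c, e1.symm⟩ (by omega)
      have z2 : b = 0 := Int.eq_zero_of_abs_lt_dvd ⟨d, e2.symm⟩ (by omega)
      rw [z1, z2] at hab
      exact mul_ne_zero hα0 hp0 (by simpa using hab.symm)
    have hqK : weierstrassP L (α * p / r) ∈ Kalg :=
      torsion_algebraic_int L h2 h3 hr0 hq (by rwa [mul_div_cancel₀ _ hrC])
    refine schanuel_two hconj h2 h3 hp hq ?_
      (S := {p, weierstrassP L p, zt L (α * p / r)}) Finset.card_le_three ?_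
    · intro hmem
      refine hend ?_
      obtain ⟨m, hm, hmα⟩ := (mem_endQ_iff L).mp hmem
      refine (mem_endQ_iff L).mpr ⟨m, hm, ?_⟩
      have : (m : ℂ) * α = r * (m * (α * p / r / p)) := by field_simp
      rw [this]
      exact (IsEnd.intCast L r).mul hmα
    · rintro _ (rfl | rfl)
      · exact ⟨subset_acl (by simp), subset_acl (by simp), Kalg_le_acl hζ⟩
      · exact ⟨div_mem (mul_mem (Kalg_le_acl hα) (subset_acl (by simp))) (intCast_mem _ r),
          Kalg_le_acl hqK, subset_acl (by simp)⟩
  refine ⟨hnot, fun hK ↦ ?_⟩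
  refine schanuel_two hconj h2 h3 hp hnot (by rwa [mul_div_cancel_right₀ _ hp0])
    (S := {p, weierstrassP L p, weierstrassP L (α * p)}) Finset.card_le_three ?_
  rintro _ (rfl | rfl)
  · exact ⟨subset_acl (by simp), subset_acl (by simp), Kalg_le_acl hζ⟩
  · exact ⟨mul_mem (Kalg_le_acl hα) (subset_acl (by simp)), subset_acl (by simp), Kalg_le_acl hK⟩

/-- The case `α ∈ k`: if `αp` is a period or `ζ(αp)` is algebraic, then `αΩ = Ω`. -/
lemma case_endQ {L : PeriodPair} (hconj : EllipticSchanuelConj L.ω₁ L.ω₂)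
    (h2 : L.g₂ ∈ Kalg) (h3 : L.g₃ ∈ Kalg) {p α : ℂ} (hp : p ∉ L.lattice) (hζ : zt L p ∈ Kalg)
    (hα : α ∈ Kalg) (hα0 : α ≠ 0) (hend : α ∈ endQ L.ω₁ L.ω₂)
    (hnot : α * p ∉ L.lattice → zt L (α * p) ∈ Kalg) : IsEnd L α ∧ IsEnd L α⁻¹ := by
  have hPK : weierstrassP L p ∉ Kalg := fun h ↦
    schanuel_one hconj h2 h3 hp hζ p (subset_acl rfl) (Kalg_le_acl h)
  have htors : ∀ n : ℤ, n ≠ 0 → (n : ℂ) * p ∉ L.lattice := fun n hn h ↦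
    hPK (torsion_algebraic_int L h2 h3 hn hp h)
  obtain ⟨m, hm, hβ⟩ := (mem_endQ_iff L).mp hend
  have hαp : α * p ∉ L.lattice := by
    intro hmem
    obtain ⟨γ, N, hγ, hN, h⟩ := hβ.exists_conj (mul_ne_zero (by exact_mod_cast hm) hα0)
    refine htors N hN ?_
    have : (N : ℂ) * p = γ * (m * (α * p)) := by rw [← h]; ring
    rw [this]
    exact hγ _ (IsEnd.intCast L m _ hmem)
  have hζα := hnot hαp
  -- a positive denominator
  obtain ⟨n, hn, hβ⟩ : ∃ n : ℕ, 1 ≤ n ∧ IsEnd L (n * α) := by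
    obtain ⟨n, rfl | rfl⟩ := m.eq_nat_or_neg
    · exact ⟨n, by omega, by exact_mod_cast hβ⟩
    · refine ⟨n, by omega, ?_⟩
      have := (IsEnd.intCast L (-1)).mul hβ
      push_cast at this
      simpa using this
  have hn0 : (n : ℂ) ≠ 0 := by norm_cast; omega
  set z := p / n with hz
  have hnz : (n : ℂ) * z = p := mul_div_cancel₀ _ hn0
  have hβz : (n : ℂ) * α * z = α * p := by rw [← hnz]; ring
  have hztors : ∀ k : ℕ, 1 ≤ k → (k : ℂ) * z ∉ L.lattice := fun k hk h ↦ by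
    refine htors k (by omega) ?_
    have := IsEnd.intCast L n _ h
    have e : ((n : ℤ) : ℂ) * (k * z) = (k : ℤ) * p := by rw [← hnz]; push_cast; ring
    rwa [e] at this
  have hpow {A : IntermediateField ℚ ℂ} (hA : Kalg ≤ A) (hx : weierstrassP L z ∈ A) :
      weierstrassP L p ∈ A := by
    have := wP_mul_mem h2 h3 hA hn (fun k hk _ ↦ hztors k hk) hx
    rwa [hnz] at this
  have hx : weierstrassP L z ∉ Kalg := fun h ↦ hPK (hpow le_rfl h)
  have hzS : z ∉ acl {weierstrassP L z} := fun h ↦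
    schanuel_one hconj h2 h3 hp hζ (weierstrassP L z)
      (by rw [← hnz]; exact mul_mem (natCast_mem _ n) h)
      (hpow (fun _ ↦ Kalg_le_acl) (subset_acl rfl))
  have hγ : IsEnd L n := by exact_mod_cast IsEnd.intCast L n
  have hβ0 := mul_ne_zero hn0 hα0
  have hnK : (n : ℂ) ∈ Kalg := natCast_mem Kalg n
  have hβK : (n : ℂ) * α ∈ Kalg := mul_mem hnK hα
  have z1 : z ∉ pre L n := by rw [pre, Set.mem_ofPred_eq, hnz]; exact hp
  have z2 : z ∉ pre L (n * α) := by rw [pre, Set.mem_ofPred_eq, hβz]; exact hαp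
  have s1 : zt L (n * z) ∈ Kalg := by rwa [hnz]
  have s2 : zt L (n * α * z) ∈ Kalg := by rwa [hβz]
  have sub1 := pre_subset h2 h3 hγ hβ hn0 hβ0 hnK hβK z1 z2 s1 s2 hx hzS
  have sub2 := pre_subset h2 h3 hβ hγ hβ0 hn0 hβK hnK z2 z1 s2 s1 hx hzS
  constructor
  · intro w hw
    have : w / n ∈ pre L (n * α) := sub1 (by
      rw [pre, Set.mem_ofPred_eq, mul_div_cancel₀ _ hn0]; exact hw)
    rw [pre, Set.mem_ofPred_eq] at this
    have e : (n : ℂ) * α * (w / n) = α * w := by field_simp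
    rwa [e] at this
  · intro w hw
    have : w / (n * α) ∈ pre L n := sub2 (by
      rw [pre, Set.mem_ofPred_eq, mul_div_cancel₀ _ hβ0]; exact hw)
    rw [pre, Set.mem_ofPred_eq] at this
    have e : (n : ℂ) * (w / (n * α)) = α⁻¹ * w := by field_simp
    rwa [e] at this

end ZetaConj

/-- **The Elliptic Schanuel Conjecture implies the `ζ`-Conjecture.** Assume the Elliptic
Schanuel Conjecture for `Ω` and that `g₂` and `g₃` are algebraic. Let `p ∈ ℂ ∖ Ω` be such
that `ζ(p)` is algebraic, and let `α` be an algebraic number, `α ∉ {0, 1, −1}`, with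
`α⁴ ≠ 1` if `g₃ = 0` and `α⁶ ≠ 1` if `g₂ = 0`. Then `αp ∉ Ω` and `ζ(αp)` is
transcendental over `ℚ`. -/
theorem ellipticSchanuel_implies_zetaConjecture (ω₁ ω₂ : ℂ) (hΩ : IsLatticeBasis ω₁ ω₂)
    (hconj : EllipticSchanuelConj ω₁ ω₂)
    (hg2 : IsAlgebraic ℚ (g2 ω₁ ω₂)) (hg3 : IsAlgebraic ℚ (g3 ω₁ ω₂))
    (p : ℂ) (hp : p ∉ LatticePts ω₁ ω₂) (hζ : IsAlgebraic ℚ (wZeta ω₁ ω₂ p))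
    (α : ℂ) (hαalg : IsAlgebraic ℚ α) (hα0 : α ≠ 0) (hα1 : α ≠ 1) (hα1' : α ≠ -1)
    (hα4 : g3 ω₁ ω₂ = 0 → α ^ 4 ≠ 1) (hα6 : g2 ω₁ ω₂ = 0 → α ^ 6 ≠ 1) :
    α * p ∉ LatticePts ω₁ ω₂ ∧ Transcendental ℚ (wZeta ω₁ ω₂ (α * p)) := by
  let L : PeriodPair := ⟨ω₁, ω₂, hΩ⟩
  have hl (z : ℂ) : z ∈ LatticePts ω₁ ω₂ ↔ z ∈ L.lattice := ZetaConj.mem_latticePts_iff L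
  have h2 : L.g₂ ∈ ZetaConj.Kalg := ZetaConj.mem_Kalg.mpr (ZetaConj.g2_eq L ▸ hg2)
  have h3 : L.g₃ ∈ ZetaConj.Kalg := ZetaConj.mem_Kalg.mpr (ZetaConj.g3_eq L ▸ hg3)
  rw [hl] at hp
  rw [hl, Transcendental, ← ZetaConj.mem_Kalg]
  rw [← ZetaConj.mem_Kalg] at hζ hαalg
  by_cases hend : α ∈ endQ ω₁ ω₂
  · by_contra hcon
    have hnot : α * p ∉ L.lattice → wZeta ω₁ ω₂ (α * p) ∈ ZetaConj.Kalg := fun h ↦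
      not_not.mp fun h' ↦ hcon ⟨h, h'⟩
    obtain ⟨h, h'⟩ := ZetaConj.case_endQ (L := L) hconj h2 h3 hp hζ hαalg hα0 hend hnot
    rcases ZetaConj.unit_cases L hα0 h h' hα1 hα1' with ⟨hz, hpow⟩ | ⟨hz, hpow⟩
    · exact hα4 hz hpow
    · exact hα6 hz hpow
  · exact ZetaConj.case_not_endQ (L := L) hconj h2 h3 hp hζ hαalg hα0 hend
end
end
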